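/- arXiv:0804.2282 — 2 statements merged into one kernel-verified Lean document; each statement's English description precedes it below -/
import Mathlib

section
/- For any fixed ε > 0 there exists a smooth map ξ = ξ(y,E) on (y,E) ∈ (ε,∞) × (0,E₀), with E₀ small, such that ξ(E^{1/2} x₁(E;ℏ), E) = 1 and for all (y,E) in this range, 1 − E^{-1} V₀(E^{-1/2} y;ℏ) = (dξ/dy)² (1 − ξ^{-2}). Moreover, with some function ξ₀(E): ξ(y,E) = y + ξ₀(E) + y^{-1} ρ₀(y,E); the derivative bounds |∂_E^k ∂_y^ℓ ξ(y,E)| ≤ C_{k,ℓ} E^{-k} y^{1−ℓ} hold for all k,ℓ ≥ 0; and |∂_E^k ξ₀(E)| ≤ C_k E^{-k}, |∂_E^k ∂_y^j ρ₀(y,E)| ≤ C_{jk} y^{-j} E^{-k} for all k,j ≥ 0, uniformly on (y,E) ∈ (1,∞) × (0,E₀). For fixed 0 < E < E₀ the map y ↦ ξ(y,E) is a global diffeomorphism whose inverse y = y(ξ,E) satisfies y(ξ,E) = ξ + y₀(E) + ξ^{-1} ρ̃₀(ξ,E) and |∂_E^k ∂_ξ^ℓ y(ξ,E)| ≤ C_{k,ℓ}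 E^{-k} ξ^{1−ℓ} for all k,ℓ ≥ 0, with y₀, ρ̃₀ obeying the same bounds as ξ₀, ρ₀ (relative to ξ rather than y). All constants may depend on ε. -/
/-- The modified potential `V₀(x;ℏ) = V(x) + (ℏ²/4)⟨x⟩⁻²` where `⟨x⟩ = √(1+x²)`. -/
noncomputable def V0 (V : ℝ → ℝ) (h x : ℝ) : ℝ := V x + h ^ 2 / 4 * (1 + x ^ 2)⁻¹

open Set Filter Topology MeasureTheory
open scoped ContDiff

/-- The partial derivative in the first variable. -/
noncomputable def pdFst (f : ℝ × ℝ → ℝ) (p : ℝ × ℝ) : ℝ := fderiv ℝ f p (1, 0)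

/-- The partial derivative in the second variable. -/
noncomputable def pdSnd (f : ℝ × ℝ → ℝ) (p : ℝ × ℝ) : ℝ := fderiv ℝ f p (0, 1)

/-- `f` is differentiable at `p` with partial derivatives `a` and `b`. -/
def HasPD (f : ℝ × ℝ → ℝ) (a b : ℝ) (p : ℝ × ℝ) : Prop :=
  HasFDerivAt f (a • ContinuousLinearMap.fst ℝ ℝ ℝ + b • ContinuousLinearMap.snd ℝ ℝ ℝ) p

/-- `f` is bounded on `U`. -/
def BddFun (U : Set (ℝ × ℝ)) (f : ℝ × ℝ → ℝ) : Prop := ∃ C, ∀ p ∈ U, |f p| ≤ C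

/-- All partial derivatives of `f` of order at most `n` exist and are bounded on `U`. -/
def BddC : ℕ → Set (ℝ × ℝ) → (ℝ × ℝ → ℝ) → Prop
  | 0, U, f => BddFun U f
  | n + 1, U, f => BddFun U f ∧ (∀ p ∈ U, DifferentiableAt ℝ f p) ∧
      BddC n U (pdFst f) ∧ BddC n U (pdSnd f)

/-- All partial derivatives of `f` of order between `1` and `n` exist and are bounded on `U`. -/
def PBddC : ℕ → Set (ℝ × ℝ) → (ℝ × ℝ → ℝ) → Prop
  | 0, _, _ => True
  | n + 1, U, f => (∀ p ∈ U, DifferentiableAt ℝ f p) ∧ BddC n U (pdFst f) ∧ BddC n U (pdSnd f)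

/-- All partial derivatives of `f` of every order exist and are bounded on `U`. -/
def SB (U : Set (ℝ × ℝ)) (f : ℝ × ℝ → ℝ) : Prop := ∀ n, BddC n U f

namespace HasPD

variable {f g : ℝ × ℝ → ℝ} {a b c d : ℝ} {p : ℝ × ℝ}

theorem pdFst_eq (h : HasPD f a b p) : pdFst f p = a := by
  unfold pdFst; rw [h.fderiv]; simp

theorem pdSnd_eq (h : HasPD f a b p) : pdSnd f p = b := by
  unfold pdSnd; rw [h.fderiv]; simp

theorem differentiableAt (h : HasPD f a b p) : DifferentiableAt ℝ f p :=
  HasFDerivAt.differentiableAt h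

theorem of_hasFDerivAt {L : ℝ × ℝ →L[ℝ] ℝ} (h : HasFDerivAt f L p) :
    HasPD f (L (1, 0)) (L (0, 1)) p := by
  unfold HasPD
  convert h using 1
  ext <;> simp

theorem _root_.DifferentiableAt.hasPD (h : DifferentiableAt ℝ f p) :
    HasPD f (pdFst f p) (pdSnd f p) p :=
  of_hasFDerivAt h.hasFDerivAt

theorem congr (h : HasPD f a b p) (hfg : f =ᶠ[𝓝 p] g) : HasPD g a b p :=
  HasFDerivAt.congr_of_eventuallyEq h hfg.symm

theorem cast (h : HasPD f a b p) (ha : a = c) (hb : b = d) : HasPD f c d p := ha ▸ hb ▸ h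

theorem fst : HasPD Prod.fst 1 0 p := by
  have := of_hasFDerivAt (p := p) (hasFDerivAt_fst (𝕜 := ℝ) (E := ℝ) (F := ℝ))
  simpa using this

theorem snd : HasPD Prod.snd 0 1 p := by
  have := of_hasFDerivAt (p := p) (hasFDerivAt_snd (𝕜 := ℝ) (E := ℝ) (F := ℝ))
  simpa using this

theorem const (k : ℝ) : HasPD (fun _ => k) 0 0 p := by
  have := of_hasFDerivAt (p := p) (hasFDerivAt_const (𝕜 := ℝ) k p)
  simpa using this

theorem add (h : HasPD f a b p) (k : HasPD g c d p) :
    HasPD (fun q => f q + g q) (a + c) (b + d) p := by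
  have := of_hasFDerivAt (HasFDerivAt.add h k)
  exact this.cast (by simp) (by simp)

theorem sub (h : HasPD f a b p) (k : HasPD g c d p) :
    HasPD (fun q => f q - g q) (a - c) (b - d) p := by
  have := of_hasFDerivAt (HasFDerivAt.sub h k)
  exact this.cast (by simp) (by simp)

theorem mul (h : HasPD f a b p) (k : HasPD g c d p) :
    HasPD (fun q => f q * g q) (a * g p + f p * c) (b * g p + f p * d) p := by
  have := of_hasFDerivAt (HasFDerivAt.mul h k)
  exact this.cast (by simp; ring) (by simp; ring)

theorem comp_real {φ : ℝ → ℝ} {k : ℝ} (hφ : HasDerivAt φ k (f p)) (h : HasPD f a b p) :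
    HasPD (fun q => φ (f q)) (k * a) (k * b) p := by
  have := of_hasFDerivAt (HasDerivAt.comp_hasFDerivAt p hφ h)
  exact this.cast (by simp) (by simp)

theorem comp_pair {F : ℝ × ℝ → ℝ} {k l : ℝ} (hF : HasPD F k l (f p, g p))
    (h : HasPD f a b p) (h' : HasPD g c d p) :
    HasPD (fun q => F (f q, g q)) (k * a + l * c) (k * b + l * d) p := by
  have := of_hasFDerivAt (HasFDerivAt.comp (g := F) (f := fun q => (f q, g q)) p hF
    (HasFDerivAt.prodMk h h'))
  exact this.cast (by simp) (by simp)

theorem hasDerivAt_fst {x t : ℝ} (h : HasPD f a b (x, t)) :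
    HasDerivAt (fun y => f (y, t)) a x := by
  have h1 : HasDerivAt (fun y : ℝ => (y, t)) ((1 : ℝ), (0 : ℝ)) x :=
    (hasDerivAt_id x).prodMk (hasDerivAt_const x t)
  have := HasFDerivAt.comp_hasDerivAt (f := fun y : ℝ => (y, t)) x h h1
  simpa [Function.comp_def] using this

theorem hasDerivAt_snd {x t : ℝ} (h : HasPD f a b (x, t)) :
    HasDerivAt (fun y => f (x, y)) b t := by
  have h1 : HasDerivAt (fun y : ℝ => (x, y)) ((0 : ℝ), (1 : ℝ)) t :=
    (hasDerivAt_const t x).prodMk (hasDerivAt_id t)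
  have := HasFDerivAt.comp_hasDerivAt (f := fun y : ℝ => (x, y)) t h h1
  simpa [Function.comp_def] using this

end HasPD

section BddC

variable {f g : ℝ × ℝ → ℝ} {U W : Set (ℝ × ℝ)} {n : ℕ}

theorem BddFun.mono (h : BddFun W f) (hU : U ⊆ W) : BddFun U f :=
  let ⟨C, hC⟩ := h; ⟨C, fun p hp => hC p (hU hp)⟩

theorem bddC_iff : BddC n U f ↔ BddFun U f ∧ PBddC n U f := by
  cases n <;> simp [BddC, PBddC]

theorem BddC.pred (h : BddC (n + 1) U f) : BddC n U f := by
  induction n generalizing f with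
  | zero => exact h.1
  | succ n ih => exact ⟨h.1, h.2.1, ih h.2.2.1, ih h.2.2.2⟩

theorem PBddC.pred (h : PBddC (n + 1) U f) : PBddC n U f := by
  cases n with
  | zero => trivial
  | succ n => exact ⟨h.1, h.2.1.pred, h.2.2.pred⟩

theorem BddC.mono (h : BddC n W f) (hU : U ⊆ W) : BddC n U f := by
  induction n generalizing f with
  | zero => exact BddFun.mono h hU
  | succ n ih => exact ⟨h.1.mono hU, fun p hp => h.2.1 p (hU hp), ih h.2.2.1, ih h.2.2.2⟩

theorem BddC.congr (hU : IsOpen U) (h : BddC n U f) (hfg : ∀ p ∈ U, f p = g p) :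
    BddC n U g := by
  induction n generalizing f g with
  | zero =>
    obtain ⟨C, hC⟩ := h
    exact ⟨C, fun p hp => hfg p hp ▸ hC p hp⟩
  | succ n ih =>
    obtain ⟨⟨C, hC⟩, hd, h1, h2⟩ := h
    have hev : ∀ p ∈ U, f =ᶠ[𝓝 p] g := fun p hp =>
      Filter.eventually_of_mem (hU.mem_nhds hp) hfg
    refine ⟨⟨C, fun p hp => hfg p hp ▸ hC p hp⟩,
      fun p hp => ((hd p hp).hasPD.congr (hev p hp)).differentiableAt, ih h1 fun p hp => ?_,
      ih h2 fun p hp => ?_⟩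
    · exact ((hd p hp).hasPD.congr (hev p hp)).pdFst_eq.symm
    · exact ((hd p hp).hasPD.congr (hev p hp)).pdSnd_eq.symm

theorem PBddC.of_hasPD (hU : IsOpen U) {a b : ℝ × ℝ → ℝ}
    (hd : ∀ p ∈ U, HasPD f (a p) (b p) p) (ha : BddC n U a) (hb : BddC n U b) :
    PBddC (n + 1) U f :=
  ⟨fun p hp => (hd p hp).differentiableAt,
    ha.congr hU fun p hp => (hd p hp).pdFst_eq.symm,
    hb.congr hU fun p hp => (hd p hp).pdSnd_eq.symm⟩

theorem BddC.of_hasPD (hU : IsOpen U) {a b : ℝ × ℝ → ℝ} (hf : BddFun U f)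
    (hd : ∀ p ∈ U, HasPD f (a p) (b p) p) (ha : BddC n U a) (hb : BddC n U b) :
    BddC (n + 1) U f :=
  ⟨hf, PBddC.of_hasPD hU hd ha hb⟩

theorem BddC.union (h : BddC n U f) (h' : BddC n W f) : BddC n (U ∪ W) f := by
  have key : ∀ {k : ℝ × ℝ → ℝ}, BddFun U k → BddFun W k → BddFun (U ∪ W) k := by
    rintro k ⟨C, hC⟩ ⟨D, hD⟩
    refine ⟨max C D, ?_⟩
    rintro p (hp | hp)
    · exact (hC p hp).trans (le_max_left _ _)
    · exact (hD p hp).trans (le_max_right _ _)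
  induction n generalizing f with
  | zero => exact key h h'
  | succ n ih =>
    refine ⟨key h.1 h'.1, ?_, ih h.2.2.1 h'.2.2.1, ih h.2.2.2 h'.2.2.2⟩
    rintro p (hp | hp)
    · exact h.2.1 p hp
    · exact h'.2.1 p hp

theorem BddC.const (hU : IsOpen U) (k : ℝ) : BddC n U (fun _ => k) := by
  induction n generalizing k with
  | zero => exact ⟨|k|, fun _ _ => le_rfl⟩
  | succ n ih =>
    exact .of_hasPD hU ⟨|k|, fun _ _ => le_rfl⟩ (fun p _ => HasPD.const k) (ih 0) (ih 0)

theorem BddC.add (hU : IsOpen U) (h : BddC n U f) (h' : BddC n U g) :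
    BddC n U (fun p => f p + g p) := by
  have key : ∀ {k l : ℝ × ℝ → ℝ}, BddFun U k → BddFun U l → BddFun U (fun p => k p + l p) := by
    rintro k l ⟨C, hC⟩ ⟨D, hD⟩
    exact ⟨C + D, fun p hp => (abs_add_le _ _).trans (add_le_add (hC p hp) (hD p hp))⟩
  induction n generalizing f g with
  | zero => exact key h h'
  | succ n ih =>
    exact .of_hasPD hU (key h.1 h'.1) (fun p hp => (h.2.1 p hp).hasPD.add (h'.2.1 p hp).hasPD)
      (ih h.2.2.1 h'.2.2.1) (ih h.2.2.2 h'.2.2.2)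

theorem BddC.mul (hU : IsOpen U) (h : BddC n U f) (h' : BddC n U g) :
    BddC n U (fun p => f p * g p) := by
  have key : ∀ {k l : ℝ × ℝ → ℝ}, BddFun U k → BddFun U l → BddFun U (fun p => k p * l p) := by
    rintro k l ⟨C, hC⟩ ⟨D, hD⟩
    refine ⟨C * D, fun p hp => ?_⟩
    rw [abs_mul]
    exact mul_le_mul (hC p hp) (hD p hp) (abs_nonneg _) ((abs_nonneg _).trans (hC p hp))
  induction n generalizing f g with
  | zero => exact key h h'
  | succ n ih =>
    exact .of_hasPD hU (key h.1 h'.1) (fun p hp => (h.2.1 p hp).hasPD.mul (h'.2.1 p hp).hasPD)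
      ((ih h.2.2.1 h'.pred).add hU (ih h.pred h'.2.2.1))
      ((ih h.2.2.2 h'.pred).add hU (ih h.pred h'.2.2.2))

theorem BddC.comp_real (hU : IsOpen U) {φ : ℝ → ℝ} {O K : Set ℝ} (hO : IsOpen O)
    (hφ : ContDiffOn ℝ ∞ φ O) (hK : IsCompact K) (hKO : K ⊆ O) (hfK : ∀ p ∈ U, f p ∈ K)
    (h : PBddC n U f) : BddC n U (fun p => φ (f p)) := by
  have key : ∀ {ψ : ℝ → ℝ}, ContDiffOn ℝ ∞ ψ O → BddFun U (fun p => ψ (f p)) := by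
    intro ψ hψ
    obtain ⟨C, hC⟩ := hK.exists_bound_of_continuousOn (hψ.continuousOn.mono hKO)
    exact ⟨C, fun p hp => hC _ (hfK p hp)⟩
  induction n generalizing φ with
  | zero => exact key hφ
  | succ n ih =>
    have hφ' : ContDiffOn ℝ ∞ (deriv φ) O :=
      hφ.deriv_of_isOpen hO (by simp)
    refine .of_hasPD hU (key hφ) (a := fun p => deriv φ (f p) * pdFst f p)
      (b := fun p => deriv φ (f p) * pdSnd f p) (fun p hp => ?_)
      ((ih hφ' h.pred).mul hU h.2.1) ((ih hφ' h.pred).mul hU h.2.2)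
    have : HasDerivAt φ (deriv φ (f p)) (f p) :=
      ((hφ.differentiableOn (by simp)).differentiableAt
        (hO.mem_nhds (hKO (hfK p hp)))).hasDerivAt
    exact HasPD.comp_real this (h.1 p hp).hasPD

theorem BddC.comp_pair (hU : IsOpen U) {F : ℝ × ℝ → ℝ} (hF : BddC n W F)
    (hfg : ∀ p ∈ U, (f p, g p) ∈ W) (hf : PBddC n U f) (hg : PBddC n U g) :
    BddC n U (fun p => F (f p, g p)) := by
  have key : ∀ {k : ℝ × ℝ → ℝ}, BddFun W k → BddFun U (fun p => k (f p, g p)) := by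
    rintro k ⟨C, hC⟩
    exact ⟨C, fun p hp => hC _ (hfg p hp)⟩
  induction n generalizing F with
  | zero => exact key hF
  | succ n ih =>
    exact .of_hasPD hU (key hF.1)
      (fun p hp => HasPD.comp_pair (hF.2.1 _ (hfg p hp)).hasPD (hf.1 p hp).hasPD
        (hg.1 p hp).hasPD)
      (((ih hF.2.2.1 hf.pred hg.pred).mul hU hf.2.1).add hU
        ((ih hF.2.2.2 hf.pred hg.pred).mul hU hg.2.1))
      (((ih hF.2.2.1 hf.pred hg.pred).mul hU hf.2.2).add hU
        ((ih hF.2.2.2 hf.pred hg.pred).mul hU hg.2.2))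

theorem PBddC.add (hU : IsOpen U) (h : PBddC n U f) (h' : PBddC n U g) :
    PBddC n U (fun p => f p + g p) := by
  cases n with
  | zero => trivial
  | succ n =>
    exact .of_hasPD hU (fun p hp => (h.1 p hp).hasPD.add (h'.1 p hp).hasPD)
      (h.2.1.add hU h'.2.1) (h.2.2.add hU h'.2.2)

theorem PBddC.fst (hU : IsOpen U) : PBddC n U Prod.fst := by
  cases n with
  | zero => trivial
  | succ n => exact .of_hasPD hU (fun p _ => HasPD.fst) (.const hU 1) (.const hU 0)

theorem PBddC.snd (hU : IsOpen U) : PBddC n U Prod.snd := by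
  cases n with
  | zero => trivial
  | succ n => exact .of_hasPD hU (fun p _ => HasPD.snd) (.const hU 0) (.const hU 1)

theorem PBddC.const (hU : IsOpen U) (k : ℝ) : PBddC n U (fun _ => k) :=
  (bddC_iff.1 (BddC.const hU k)).2

end BddC

namespace SB

variable {f g : ℝ × ℝ → ℝ} {U W : Set (ℝ × ℝ)}

theorem pBddC (h : SB U f) (n : ℕ) : PBddC n U f := (bddC_iff.1 (h n)).2

theorem bddFun (h : SB U f) : BddFun U f := h 0

theorem differentiableAt (h : SB U f) {p : ℝ × ℝ} (hp : p ∈ U) : DifferentiableAt ℝ f p :=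
  (h 1).2.1 p hp

theorem hasPD (h : SB U f) {p : ℝ × ℝ} (hp : p ∈ U) : HasPD f (pdFst f p) (pdSnd f p) p :=
  (h.differentiableAt hp).hasPD

theorem pdFst (h : SB U f) : SB U (pdFst f) := fun n => (h (n + 1)).2.2.1

theorem pdSnd (h : SB U f) : SB U (pdSnd f) := fun n => (h (n + 1)).2.2.2

theorem continuousOn (h : SB U f) : ContinuousOn f U := fun _ hp =>
  (h.differentiableAt hp).continuousAt.continuousWithinAt

theorem mono (h : SB W f) (hU : U ⊆ W) : SB U f := fun n => (h n).mono hU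

theorem congr (hU : IsOpen U) (h : SB U f) (hfg : ∀ p ∈ U, f p = g p) : SB U g :=
  fun n => (h n).congr hU hfg

theorem union (h : SB U f) (h' : SB W f) : SB (U ∪ W) f := fun n => (h n).union (h' n)

theorem const (hU : IsOpen U) (k : ℝ) : SB U (fun _ => k) := fun _ => .const hU k

theorem add (hU : IsOpen U) (h : SB U f) (h' : SB U g) : SB U (fun p => f p + g p) :=
  fun n => (h n).add hU (h' n)

theorem mul (hU : IsOpen U) (h : SB U f) (h' : SB U g) : SB U (fun p => f p * g p) :=
  fun n => (h n).mul hU (h' n)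

theorem const_mul (hU : IsOpen U) (k : ℝ) (h : SB U f) : SB U (fun p => k * f p) :=
  (const hU k).mul hU h

theorem neg (hU : IsOpen U) (h : SB U f) : SB U (fun p => -f p) :=
  (h.const_mul hU (-1)).congr hU fun p _ => by ring

theorem sub (hU : IsOpen U) (h : SB U f) (h' : SB U g) : SB U (fun p => f p - g p) :=
  (h.add hU (h'.neg hU)).congr hU fun p _ => by ring

theorem comp_real (hU : IsOpen U) (h : SB U f) {φ : ℝ → ℝ} {O K : Set ℝ} (hO : IsOpen O)
    (hφ : ContDiffOn ℝ ∞ φ O) (hK : IsCompact K) (hKO : K ⊆ O) (hfK : ∀ p ∈ U, f p ∈ K) :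
    SB U (fun p => φ (f p)) :=
  fun n => .comp_real hU hO hφ hK hKO hfK (h.pBddC n)

theorem comp_contDiff (hU : IsOpen U) (h : SB U f) {φ : ℝ → ℝ} (hφ : ContDiff ℝ ∞ φ) :
    SB U (fun p => φ (f p)) := by
  obtain ⟨C, hC⟩ := h.bddFun
  exact h.comp_real hU isOpen_univ hφ.contDiffOn (isCompact_Icc (a := -C) (b := C))
    (subset_univ _) fun p hp => abs_le.1 (hC p hp)

theorem exp (hU : IsOpen U) (h : SB U f) : SB U (fun p => Real.exp (f p)) :=
  h.comp_contDiff hU Real.contDiff_exp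

/-- Composition with a function which is smooth on the positive half-line. -/
theorem comp_pos (hU : IsOpen U) (h : SB U f) {φ : ℝ → ℝ} (hφ : ContDiffOn ℝ ∞ φ (Ioi 0))
    {c : ℝ} (hc : 0 < c) (hfc : ∀ p ∈ U, c ≤ f p) : SB U (fun p => φ (f p)) := by
  obtain ⟨C, hC⟩ := h.bddFun
  exact h.comp_real hU isOpen_Ioi hφ (isCompact_Icc (a := c) (b := C))
    (fun x hx => hc.trans_le hx.1) fun p hp => ⟨hfc p hp, (abs_le.1 (hC p hp)).2⟩

theorem comp_pair (hU : IsOpen U) {F : ℝ × ℝ → ℝ} (hF : SB W F)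
    (hfg : ∀ p ∈ U, (f p, g p) ∈ W) (hf : ∀ n, PBddC n U f) (hg : ∀ n, PBddC n U g) :
    SB U (fun p => F (f p, g p)) :=
  fun n => .comp_pair hU (hF n) hfg (hf n) (hg n)

theorem rpow (hU : IsOpen U) (h : SB U f) (r : ℝ) {c : ℝ} (hc : 0 < c)
    (hfc : ∀ p ∈ U, c ≤ f p) : SB U (fun p => f p ^ r) :=
  h.comp_pos hU (φ := fun x => x ^ r)
    (fun _ hx => (Real.contDiffAt_rpow_const_of_ne (ne_of_gt hx)).contDiffWithinAt) hc hfc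

theorem sqrt (hU : IsOpen U) (h : SB U f) {c : ℝ} (hc : 0 < c)
    (hfc : ∀ p ∈ U, c ≤ f p) : SB U (fun p => √(f p)) :=
  h.comp_pos hU (φ := fun x => √x)
    (fun _ hx => (Real.contDiffAt_sqrt (ne_of_gt hx)).contDiffWithinAt) hc hfc

theorem inv (hU : IsOpen U) (h : SB U f) {c : ℝ} (hc : 0 < c)
    (hfc : ∀ p ∈ U, c ≤ f p) : SB U (fun p => (f p)⁻¹) :=
  h.comp_pos hU (φ := fun x => x⁻¹)
    (fun _ hx => (contDiffAt_inv ℝ (ne_of_gt hx)).contDiffWithinAt) hc hfc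

theorem log (hU : IsOpen U) (h : SB U f) {c : ℝ} (hc : 0 < c)
    (hfc : ∀ p ∈ U, c ≤ f p) : SB U (fun p => Real.log (f p)) :=
  h.comp_pos hU (φ := Real.log)
    (fun _ hx => (Real.contDiffAt_log.2 (ne_of_gt hx)).contDiffWithinAt) hc hfc

/-- The exponential of `k` times the first variable is bounded where the exponent is. -/
theorem exp_mul_fst (hU : IsOpen U) (k : ℝ) {C : ℝ} (hC : ∀ p ∈ U, k * p.1 ≤ C) :
    SB U (fun p => Real.exp (k * p.1)) := by
  intro n
  have hb : BddFun U (fun p : ℝ × ℝ => Real.exp (k * p.1)) :=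
    ⟨Real.exp C, fun p hp => by rw [abs_of_pos (Real.exp_pos _)]; exact Real.exp_le_exp.2 (hC p hp)⟩
  induction n with
  | zero => exact hb
  | succ n ih =>
    refine .of_hasPD hU hb (a := fun p => k * Real.exp (k * p.1)) (b := fun _ => 0)
      (fun p _ => ?_) (BddC.mul hU (.const hU k) ih) (.const hU 0)
    exact (HasPD.comp_real (Real.hasDerivAt_exp _) ((HasPD.const k).mul HasPD.fst)).cast
      (by ring) (by ring)

theorem contDiffOn (hU : IsOpen U) (h : SB U f) (n : ℕ) : ContDiffOn ℝ n f U := by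
  have key : ∀ {n : ℕ} {f : ℝ × ℝ → ℝ}, SB U f → ContDiffOn ℝ n f U := by
    intro n
    induction n with
    | zero => exact fun h => contDiffOn_zero.2 h.continuousOn
    | succ n ih =>
      intro f h
      push_cast
      rw [contDiffOn_succ_iff_fderiv_of_isOpen hU]
      refine ⟨fun p hp => (h.differentiableAt hp).differentiableWithinAt, by simp, ?_⟩
      have h1 : ContDiffOn ℝ n (fun p => _root_.pdFst f p • ContinuousLinearMap.fst ℝ ℝ ℝ
          + _root_.pdSnd f p • ContinuousLinearMap.snd ℝ ℝ ℝ) U :=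
        ((ih h.pdFst).smul contDiffOn_const).add ((ih h.pdSnd).smul contDiffOn_const)
      exact h1.congr fun p hp => HasFDerivAt.fderiv (h.hasPD hp)
  exact key h

end SB

theorem PBddC.sub {f g : ℝ × ℝ → ℝ} {U : Set (ℝ × ℝ)} {n : ℕ} (hU : IsOpen U)
    (h : PBddC n U f) (h' : PBddC n U g) : PBddC n U (fun p => f p - g p) := by
  cases n with
  | zero => trivial
  | succ n =>
    refine .of_hasPD hU (fun p hp => (h.1 p hp).hasPD.sub (h'.1 p hp).hasPD)
      (((h.2.1.add hU ((BddC.const hU (-1)).mul hU h'.2.1))).congr hU fun p _ => ?_)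
      (((h.2.2.add hU ((BddC.const hU (-1)).mul hU h'.2.2))).congr hU fun p _ => ?_) <;> ring

/-- The half-plane on which the first variable is greater than `a`. -/
def rightOf (a : ℝ) : Set (ℝ × ℝ) := {p | a < p.1}

theorem isOpen_rightOf (a : ℝ) : IsOpen (rightOf a) := isOpen_lt continuous_const continuous_fst

/-- An increasing change of the first variable, depending on the second one as a parameter, which
on every right half-plane differs from the identity by a function with bounded derivatives and has
derivative bounded below, and which tends to `-∞` at `-∞` uniformly in the parameter. -/
structure IsBddDiffeo (f : ℝ × ℝ → ℝ) : Prop where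
  sb : ∀ a, SB (rightOf a) (fun p => f p - p.1)
  pos : ∀ a, ∃ c > 0, ∀ p ∈ rightOf a, c ≤ pdFst f p
  low : ∀ N, ∃ M, ∀ p : ℝ × ℝ, p.1 ≤ M → f p ≤ N

namespace IsBddDiffeo

variable {f g : ℝ × ℝ → ℝ}

theorem pBddC (h : IsBddDiffeo f) (a : ℝ) (n : ℕ) : PBddC n (rightOf a) f := by
  have := ((h.sb a).pBddC n).add (isOpen_rightOf a) (.fst (isOpen_rightOf a))
  simpa using this

theorem hasPD (h : IsBddDiffeo f) (p : ℝ × ℝ) : HasPD f (pdFst f p) (pdSnd f p) p :=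
  ((h.pBddC (p.1 - 1) 1).1 p (by simp [rightOf])).hasPD

theorem sb_pdFst (h : IsBddDiffeo f) (a : ℝ) : SB (rightOf a) (pdFst f) :=
  fun n => (h.pBddC a (n + 1)).2.1

theorem sb_pdSnd (h : IsBddDiffeo f) (a : ℝ) : SB (rightOf a) (pdSnd f) :=
  fun n => (h.pBddC a (n + 1)).2.2

theorem continuous (h : IsBddDiffeo f) : Continuous f :=
  continuous_iff_continuousAt.2 fun p => (h.hasPD p).differentiableAt.continuousAt

theorem contDiff (h : IsBddDiffeo f) (n : ℕ) : ContDiff ℝ n f := by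
  rw [contDiff_iff_contDiffAt]
  intro p
  have hp : rightOf (p.1 - 1) ∈ 𝓝 p := (isOpen_rightOf _).mem_nhds (by simp [rightOf])
  have := (((h.sb (p.1 - 1)).contDiffOn (isOpen_rightOf _) n).contDiffAt hp).add
    (contDiff_fst.contDiffAt (x := p))
  simpa using this

theorem pdFst_pos (h : IsBddDiffeo f) (p : ℝ × ℝ) : 0 < pdFst f p := by
  obtain ⟨c, hc, hp⟩ := h.pos (p.1 - 1)
  exact hc.trans_le (hp p (by simp [rightOf]))

theorem strictMono (h : IsBddDiffeo f) (t : ℝ) : StrictMono (fun x => f (x, t)) := by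
  refine strictMono_of_deriv_pos fun x => ?_
  rw [(h.hasPD (x, t)).hasDerivAt_fst.deriv]
  exact h.pdFst_pos _

theorem surjective (h : IsBddDiffeo f) (t : ℝ) : Function.Surjective (fun x => f (x, t)) := by
  refine Continuous.surjective (h.continuous.comp (by fun_prop)) ?_ ?_
  · obtain ⟨C, hC⟩ := (h.sb 0).bddFun
    refine tendsto_atTop_mono' atTop (f₁ := fun x => x + -C) ?_
      (tendsto_id.atTop_add tendsto_const_nhds)
    filter_upwards [eventually_gt_atTop 0] with x hx
    have := abs_le.1 (hC (x, t) hx)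
    dsimp at this ⊢
    linarith [this.1]
  · refine tendsto_atBot.2 fun N => ?_
    obtain ⟨M, hM⟩ := h.low N
    filter_upwards [eventually_le_atBot M] with x hx
    exact hM (x, t) hx

theorem continuous_of_inverse (h : IsBddDiffeo f) (hfg : ∀ x t, f (g (x, t), t) = x) :
    Continuous g := by
  refine continuous_iff_continuousAt.2 fun p => ?_
  obtain ⟨x, t⟩ := p
  rw [ContinuousAt, Metric.tendsto_nhds]
  intro ε hε
  have h1 : ∀ᶠ q : ℝ × ℝ in 𝓝 (x, t), f (g (x, t) - ε, q.2) < q.1 := by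
    refine ContinuousAt.eventually_lt (f := fun q : ℝ × ℝ => f (g (x, t) - ε, q.2))
      (h.continuous.comp (by fun_prop)).continuousAt continuous_fst.continuousAt ?_
    have := h.strictMono t (show g (x, t) - ε < g (x, t) by linarith)
    simpa only [hfg] using this
  have h2 : ∀ᶠ q : ℝ × ℝ in 𝓝 (x, t), q.1 < f (g (x, t) + ε, q.2) := by
    refine ContinuousAt.eventually_lt (g := fun q : ℝ × ℝ => f (g (x, t) + ε, q.2))
      continuous_fst.continuousAt (h.continuous.comp (by fun_prop)).continuousAt ?_
    have := h.strictMono t (show g (x, t) < g (x, t) + ε by linarith)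
    simpa only [hfg] using this
  filter_upwards [h1, h2] with q hq1 hq2
  rw [← hfg q.1 q.2] at hq1 hq2
  have h3 := (h.strictMono q.2).lt_iff_lt.1 hq1
  have h4 := (h.strictMono q.2).lt_iff_lt.1 hq2
  rw [Real.dist_eq, abs_lt]
  constructor <;> linarith

theorem hasPD_of_inverse (h : IsBddDiffeo f) (hfg : ∀ x t, f (g (x, t), t) = x) (p : ℝ × ℝ) :
    HasPD g (pdFst f (g p, p.2))⁻¹
      (-((pdFst f (g p, p.2))⁻¹ * pdSnd f (g p, p.2))) p := by
  set a := pdFst f (g p, p.2)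
  set b := pdSnd f (g p, p.2)
  have ha : a ≠ 0 := (h.pdFst_pos _).ne'
  let L : ℝ × ℝ →L[ℝ] ℝ × ℝ := (a • ContinuousLinearMap.fst ℝ ℝ ℝ +
    b • ContinuousLinearMap.snd ℝ ℝ ℝ).prod (ContinuousLinearMap.snd ℝ ℝ ℝ)
  let L' : ℝ × ℝ →L[ℝ] ℝ × ℝ := (a⁻¹ • ContinuousLinearMap.fst ℝ ℝ ℝ +
    (-(a⁻¹ * b)) • ContinuousLinearMap.snd ℝ ℝ ℝ).prod (ContinuousLinearMap.snd ℝ ℝ ℝ)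
  have e1 : Function.LeftInverse L' L := by
    rintro ⟨x, t⟩
    ext
    · simp [L, L']; field_simp; ring
    · simp [L, L']
  have e2 : Function.RightInverse L' L := by
    rintro ⟨x, t⟩
    ext
    · simp [L, L']; field_simp; ring
    · simp [L, L']
  let e := ContinuousLinearEquiv.equivOfInverse L L' e1 e2
  have hT : HasFDerivAt (fun q : ℝ × ℝ => (f q, q.2)) (e : ℝ × ℝ →L[ℝ] ℝ × ℝ) (g p, p.2) :=
    HasFDerivAt.prodMk (h.hasPD (g p, p.2)) hasFDerivAt_snd
  have hG : HasFDerivAt (fun q : ℝ × ℝ => (g q, q.2)) (e.symm : ℝ × ℝ →L[ℝ] ℝ × ℝ) p := by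
    refine HasFDerivAt.of_local_left_inverse (f := fun q : ℝ × ℝ => (f q, q.2))
      ((h.continuous_of_inverse hfg).prodMk continuous_snd).continuousAt hT
      (Eventually.of_forall fun q => ?_)
    simp [hfg]
  have h1 := HasFDerivAt.comp p (hasFDerivAt_fst (𝕜 := ℝ) (E := ℝ) (F := ℝ)) hG
  exact (HasPD.of_hasFDerivAt h1).cast (by simp [e, L']) (by simp [e, L'])

theorem of_inverse (h : IsBddDiffeo f) (hfg : ∀ x t, f (g (x, t), t) = x) : IsBddDiffeo g := by
  have hmaps : ∀ a, ∃ M, ∀ p ∈ rightOf a, (g p, p.2) ∈ rightOf M := by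
    intro a
    obtain ⟨M, hM⟩ := h.low a
    refine ⟨M, fun p hp => ?_⟩
    by_contra hcon
    have := hM (g p, p.2) (not_lt.1 hcon)
    rw [hfg] at this
    exact absurd hp (not_lt.2 this)
  refine ⟨fun a => ?_, fun a => ?_, fun N => ?_⟩
  · obtain ⟨M, hM⟩ := hmaps a
    obtain ⟨c, hc, hpos⟩ := h.pos M
    have hU := isOpen_rightOf a
    have hinv : SB (rightOf M) (fun p => (pdFst f p)⁻¹) :=
      (h.sb_pdFst M).inv (isOpen_rightOf M) hc hpos
    have hinv' : SB (rightOf M) (fun p => -((pdFst f p)⁻¹ * pdSnd f p)) :=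
      (hinv.mul (isOpen_rightOf M) (h.sb_pdSnd M)).neg (isOpen_rightOf M)
    have key : ∀ n, PBddC n (rightOf a) g := by
      intro n
      induction n with
      | zero => trivial
      | succ n ih =>
        exact .of_hasPD hU (fun p _ => h.hasPD_of_inverse hfg p)
          ((hinv n).comp_pair hU hM ih (.snd hU)) ((hinv' n).comp_pair hU hM ih (.snd hU))
    intro n
    refine bddC_iff.2 ⟨?_, (key n).sub hU (.fst hU)⟩
    obtain ⟨C, hC⟩ := (h.sb M).bddFun
    refine ⟨C, fun p hp => ?_⟩
    have := hC _ (hM p hp)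
    dsimp only at this ⊢
    rw [hfg] at this
    rwa [abs_sub_comm]
  · obtain ⟨M, hM⟩ := hmaps a
    obtain ⟨C, hC⟩ := (h.sb_pdFst M).bddFun
    refine ⟨(max C 1)⁻¹, by positivity, fun p hp => ?_⟩
    rw [(h.hasPD_of_inverse hfg p).pdFst_eq]
    exact inv_anti₀ (h.pdFst_pos _) (((le_abs_self _).trans (hC _ (hM p hp))).trans (le_max_left _ _))
  · obtain ⟨C, hC⟩ := (h.sb (N - 1)).bddFun
    refine ⟨N - C, fun p hp => ?_⟩
    by_contra hcon
    have h1 := h.strictMono p.2 (not_le.1 hcon)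
    dsimp only at h1
    rw [hfg] at h1
    have h2 := (abs_le.1 (hC (N, p.2) (by simp [rightOf]))).1
    dsimp only at h2
    linarith

theorem exists_inverse (h : IsBddDiffeo f) :
    ∃ g, IsBddDiffeo g ∧ (∀ x t, f (g (x, t), t) = x) ∧ ∀ x t, g (f (x, t), t) = x := by
  choose G hG using fun t => h.surjective t
  have hfg : ∀ x t, f (G t x, t) = x := fun x t => hG t x
  exact ⟨fun p => G p.2 p.1, h.of_inverse (g := fun p => G p.2 p.1) hfg, hfg,
    fun x t => (h.strictMono t).injective (hfg _ t)⟩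

theorem exists_maps (h : IsBddDiffeo f) (a : ℝ) : ∃ b, ∀ p ∈ rightOf a, (f p, p.2) ∈ rightOf b := by
  obtain ⟨C, hC⟩ := (h.sb a).bddFun
  refine ⟨a - C - 1, fun p hp => ?_⟩
  have := (abs_le.1 (hC p hp)).1
  simp only [rightOf, mem_ofPred_eq] at *
  linarith

theorem comp (hf : IsBddDiffeo f) (hg : IsBddDiffeo g) :
    IsBddDiffeo (fun p => f (g p, p.2)) := by
  refine ⟨fun a => ?_, fun a => ?_, fun N => ?_⟩
  · obtain ⟨b, hb⟩ := hg.exists_maps a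
    have hU := isOpen_rightOf a
    have h1 := SB.comp_pair hU (hf.sb b) hb (hg.pBddC a) (fun _ => .snd hU)
    exact (h1.add hU (hg.sb a)).congr hU fun p _ => by simp
  · obtain ⟨b, hb⟩ := hg.exists_maps a
    obtain ⟨c, hc, hf'⟩ := hf.pos b
    obtain ⟨d, hd, hg'⟩ := hg.pos a
    refine ⟨c * d, by positivity, fun p hp => ?_⟩
    rw [((hf.hasPD (g p, p.2)).comp_pair (hg.hasPD p) HasPD.snd).pdFst_eq]
    have := mul_le_mul (hf' _ (hb p hp)) (hg' p hp) hd.le (hf.pdFst_pos _).le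
    linarith
  · obtain ⟨M, hM⟩ := hf.low N
    obtain ⟨M', hM'⟩ := hg.low M
    exact ⟨M', fun p hp => hM _ (hM' p hp)⟩

end IsBddDiffeo

/-- The average of the functions `p ↦ h (α q * p.1 + β q, p.2)` against the weight `w`. -/
noncomputable def wavg (w α β : ℝ → ℝ) (h : ℝ × ℝ → ℝ) (p : ℝ × ℝ) : ℝ :=
  ∫ q in Ioo (0 : ℝ) 1, w q * h (α q * p.1 + β q, p.2)

section wavg

variable {w α β : ℝ → ℝ} {h : ℝ × ℝ → ℝ} {U W : Set (ℝ × ℝ)}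

theorem wavg_bddFun {B : ℝ} (hB : ∀ q ∈ Ioo (0 : ℝ) 1, |w q| ≤ B)
    (hmaps : ∀ p ∈ U, ∀ q ∈ Ioo (0 : ℝ) 1, (α q * p.1 + β q, p.2) ∈ W) (hh : BddFun W h) :
    BddFun U (wavg w α β h) := by
  obtain ⟨C, hC⟩ := hh
  refine ⟨B * C, fun p hp => ?_⟩
  have := norm_setIntegral_le_of_norm_le_const (μ := volume) (s := Ioo (0 : ℝ) 1)
    (f := fun q => w q * h (α q * p.1 + β q, p.2)) (C := B * C) (by simp) (fun q hq => by
      rw [Real.norm_eq_abs, abs_mul]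
      exact mul_le_mul (hB q hq) (hC _ (hmaps p hp q hq)) (abs_nonneg _)
        ((abs_nonneg _).trans (hB q hq)))
  simpa [wavg] using this

theorem wavg_aestronglyMeasurable (hw : ContinuousOn w (Ioo 0 1)) (hα : ContinuousOn α (Ioo 0 1))
    (hβ : ContinuousOn β (Ioo 0 1)) (hh : ContinuousOn h W) {p : ℝ × ℝ}
    (hmaps : ∀ q ∈ Ioo (0 : ℝ) 1, (α q * p.1 + β q, p.2) ∈ W) :
    AEStronglyMeasurable (fun q => w q * h (α q * p.1 + β q, p.2))
      (volume.restrict (Ioo (0 : ℝ) 1)) := by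
  refine ContinuousOn.aestronglyMeasurable (hw.mul (hh.comp ?_ hmaps)) measurableSet_Ioo
  exact ((hα.mul continuousOn_const).add hβ).prodMk continuousOn_const

theorem wavg_integrable {B : ℝ} (hB : ∀ q ∈ Ioo (0 : ℝ) 1, |w q| ≤ B)
    (hw : ContinuousOn w (Ioo 0 1)) (hα : ContinuousOn α (Ioo 0 1))
    (hβ : ContinuousOn β (Ioo 0 1)) (hh : ContinuousOn h W) (hb : BddFun W h) {p : ℝ × ℝ}
    (hmaps : ∀ q ∈ Ioo (0 : ℝ) 1, (α q * p.1 + β q, p.2) ∈ W) :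
    IntegrableOn (fun q => w q * h (α q * p.1 + β q, p.2)) (Ioo (0 : ℝ) 1) := by
  obtain ⟨C, hC⟩ := hb
  refine Integrable.of_bound (wavg_aestronglyMeasurable hw hα hβ hh hmaps) (B * C)
    ((ae_restrict_iff' measurableSet_Ioo).2 (Eventually.of_forall fun q hq => ?_))
  rw [Real.norm_eq_abs, abs_mul]
  exact mul_le_mul (hB q hq) (hC _ (hmaps q hq)) (abs_nonneg _) ((abs_nonneg _).trans (hB q hq))

theorem wavg_hasPD (hU : IsOpen U) {B : ℝ} (hB : ∀ q ∈ Ioo (0 : ℝ) 1, |w q| ≤ B)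
    (hA : ∀ q ∈ Ioo (0 : ℝ) 1, |α q| ≤ 1)
    (hw : ContinuousOn w (Ioo 0 1)) (hα : ContinuousOn α (Ioo 0 1))
    (hβ : ContinuousOn β (Ioo 0 1))
    (hmaps : ∀ p ∈ U, ∀ q ∈ Ioo (0 : ℝ) 1, (α q * p.1 + β q, p.2) ∈ W) (hh : SB W h)
    {p : ℝ × ℝ} (hp : p ∈ U) :
    HasPD (wavg w α β h) (wavg (fun q => w q * α q) α β (pdFst h) p)
      (wavg w α β (pdSnd h) p) p := by
  have hB' : ∀ q ∈ Ioo (0 : ℝ) 1, |w q * α q| ≤ B := fun q hq => by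
    rw [abs_mul]
    exact (mul_le_mul (hB q hq) (hA q hq) (abs_nonneg _)
      ((abs_nonneg _).trans (hB q hq))).trans_eq (mul_one B)
  let F' : ℝ × ℝ → ℝ → (ℝ × ℝ →L[ℝ] ℝ) := fun p q =>
    (w q * α q * pdFst h (α q * p.1 + β q, p.2)) • ContinuousLinearMap.fst ℝ ℝ ℝ +
      (w q * pdSnd h (α q * p.1 + β q, p.2)) • ContinuousLinearMap.snd ℝ ℝ ℝ
  obtain ⟨C₁, hC₁⟩ := hh.pdFst.bddFun
  obtain ⟨C₂, hC₂⟩ := hh.pdSnd.bddFun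
  have i1 := wavg_integrable (p := p) hB' (hw.mul hα) hα hβ hh.pdFst.continuousOn hh.pdFst.bddFun
    (hmaps p hp)
  have i2 := wavg_integrable (p := p) hB hw hα hβ hh.pdSnd.continuousOn hh.pdSnd.bddFun
    (hmaps p hp)
  have i1' := i1.smul_const (ContinuousLinearMap.fst ℝ ℝ ℝ)
  have i2' := i2.smul_const (ContinuousLinearMap.snd ℝ ℝ ℝ)
  have key : HasFDerivAt (wavg w α β h) (∫ q in Ioo (0 : ℝ) 1, F' p q) p := by
    refine hasFDerivAt_integral_of_dominated_of_fderiv_le (s := U) (hU.mem_nhds hp)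
      (bound := fun _ => B * C₁ * ‖ContinuousLinearMap.fst ℝ ℝ ℝ‖ +
        B * C₂ * ‖ContinuousLinearMap.snd ℝ ℝ ℝ‖) ?_ ?_ ?_ ?_ ?_ ?_
    · filter_upwards [hU.mem_nhds hp] with x hx
      exact wavg_aestronglyMeasurable hw hα hβ hh.continuousOn (hmaps x hx)
    · exact wavg_integrable hB hw hα hβ hh.continuousOn hh.bddFun (hmaps p hp)
    · exact (i1'.add i2').aestronglyMeasurable
    · refine (ae_restrict_iff' measurableSet_Ioo).2 (Eventually.of_forall fun q hq x hx => ?_)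
      refine (norm_add_le _ _).trans (add_le_add ?_ ?_)
      · rw [norm_smul, Real.norm_eq_abs, abs_mul]
        gcongr
        · exact (abs_nonneg _).trans (hB q hq)
        · exact hB' q hq
        · exact hC₁ _ (hmaps x hx q hq)
      · rw [norm_smul, Real.norm_eq_abs, abs_mul]
        gcongr
        · exact (abs_nonneg _).trans (hB q hq)
        · exact hB q hq
        · exact hC₂ _ (hmaps x hx q hq)
    · exact integrable_const _
    · refine (ae_restrict_iff' measurableSet_Ioo).2 (Eventually.of_forall fun q hq x hx => ?_)
      have h1 := HasPD.comp_pair (p := x) (f := fun p : ℝ × ℝ => α q * p.1 + β q) (g := Prod.snd)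
        (hh.hasPD (hmaps x hx q hq))
        (((HasPD.const (α q)).mul HasPD.fst).add (HasPD.const (β q))) HasPD.snd
      exact ((HasPD.const (w q)).mul h1).cast (by ring) (by ring)
  refine (HasPD.of_hasFDerivAt key).cast ?_ ?_
  · rw [integral_add i1' i2', add_apply, integral_smul_const,
      integral_smul_const]
    simp [wavg]
  · rw [integral_add i1' i2', add_apply, integral_smul_const,
      integral_smul_const]
    simp [wavg]

theorem SB.wavg (hU : IsOpen U) {B : ℝ} (hB : ∀ q ∈ Ioo (0 : ℝ) 1, |w q| ≤ B)
    (hA : ∀ q ∈ Ioo (0 : ℝ) 1, |α q| ≤ 1)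
    (hw : ContinuousOn w (Ioo 0 1)) (hα : ContinuousOn α (Ioo 0 1))
    (hβ : ContinuousOn β (Ioo 0 1))
    (hmaps : ∀ p ∈ U, ∀ q ∈ Ioo (0 : ℝ) 1, (α q * p.1 + β q, p.2) ∈ W) (hh : SB W h) :
    SB U (wavg w α β h) := by
  intro n
  induction n generalizing w h with
  | zero => exact wavg_bddFun hB hmaps hh.bddFun
  | succ n ih =>
    have hB' : ∀ q ∈ Ioo (0 : ℝ) 1, |w q * α q| ≤ B := fun q hq => by
      rw [abs_mul]
      exact (mul_le_mul (hB q hq) (hA q hq) (abs_nonneg _)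
        ((abs_nonneg _).trans (hB q hq))).trans_eq (mul_one B)
    exact .of_hasPD hU (wavg_bddFun hB hmaps hh.bddFun)
      (fun p hp => wavg_hasPD hU hB hA hw hα hβ hmaps hh hp)
      (ih hB' (hw.mul hα) hh.pdFst) (ih hB hw hh.pdSnd)

end wavg

/-- The vertical strip on which the first variable is less than `M` in absolute value. -/
def strip (M : ℝ) : Set (ℝ × ℝ) := {p | |p.1| < M}

theorem isOpen_strip (M : ℝ) : IsOpen (strip M) :=
  isOpen_lt continuous_fst.abs continuous_const

theorem mem_strip_self (p : ℝ × ℝ) : p ∈ strip (|p.1| + 1) := by simp [strip]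

theorem strip_subset_rightOf (M : ℝ) : strip M ⊆ rightOf (-M) := fun p hp =>
  show -M < p.1 from (abs_lt.1 hp).1

theorem strip_maps {M r : ℝ} (h0 : 0 ≤ r) (h1 : r ≤ 1) {p : ℝ × ℝ} (hp : p ∈ strip M) :
    (r * p.1 + 0, p.2) ∈ strip M := by
  simp only [strip, mem_ofPred_eq, add_zero, abs_mul, abs_of_nonneg h0] at *
  exact (mul_le_of_le_one_left (abs_nonneg _) h1).trans_lt hp

theorem sq_mem_unit {q : ℝ} (hq : q ∈ Ioo (0 : ℝ) 1) : 0 ≤ q ^ 2 ∧ q ^ 2 ≤ 1 :=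
  ⟨sq_nonneg q, pow_le_one₀ hq.1.le hq.2.le⟩

theorem setIntegral_Ioo_eq (f : ℝ → ℝ) :
    ∫ q in Ioo (0 : ℝ) 1, f q = ∫ q in (0 : ℝ)..1, f q := by
  rw [intervalIntegral.integral_of_le zero_le_one, integral_Ioc_eq_integral_Ioo]

/-- The function `(exp (2 x) - 1) / x`, extended smoothly through `x = 0`. -/
noncomputable def expQuot : ℝ × ℝ → ℝ :=
  wavg (fun _ => 2) (fun q => q) (fun _ => 0) (fun p => Real.exp (2 * p.1))

theorem sb_exp_strip (k M : ℝ) : SB (strip M) (fun p => Real.exp (k * p.1)) :=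
  .exp_mul_fst (isOpen_strip M) k (C := |k| * M) fun p hp => by
    have := abs_nonneg k
    calc k * p.1 ≤ |k * p.1| := le_abs_self _
      _ = |k| * |p.1| := abs_mul _ _
      _ ≤ |k| * M := by gcongr; exact le_of_lt hp

theorem sb_fst_strip (M : ℝ) : SB (strip M) (fun p => p.1) := fun _ =>
  bddC_iff.2 ⟨⟨M, fun _ hp => le_of_lt hp⟩, .fst (isOpen_strip M)⟩

theorem sb_expQuot (M : ℝ) : SB (strip M) expQuot :=
  .wavg (isOpen_strip M) (B := 2) (fun q _ => by simp)
    (fun q hq => by rw [abs_of_pos hq.1]; exact hq.2.le) continuousOn_const continuousOn_id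
    continuousOn_const (fun p hp q hq => strip_maps hq.1.le hq.2.le hp) (sb_exp_strip 2 M)

theorem expQuot_integrable (x : ℝ) :
    IntegrableOn (fun q : ℝ => 2 * Real.exp (2 * (q * x + 0))) (Ioo 0 1) :=
  (Continuous.integrableOn_Icc (by fun_prop)).mono_set Ioo_subset_Icc_self

theorem fst_mul_expQuot (p : ℝ × ℝ) : p.1 * expQuot p = Real.exp (2 * p.1) - 1 := by
  unfold expQuot wavg
  rw [setIntegral_Ioo_eq, ← intervalIntegral.integral_const_mul]
  have h : ∀ q ∈ uIcc (0 : ℝ) 1, HasDerivAt (fun q : ℝ => Real.exp (2 * (q * p.1)))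
      (p.1 * (2 * Real.exp (2 * (q * p.1 + 0)))) q := by
    intro q _
    have h1 : HasDerivAt (fun q : ℝ => Real.exp (2 * (q * p.1)))
        (Real.exp (2 * (q * p.1)) * (2 * (1 * p.1))) q :=
      (((hasDerivAt_id q).mul_const p.1).const_mul 2).exp
    convert h1 using 1
    rw [add_zero]
    ring
  rw [intervalIntegral.integral_eq_sub_of_hasDerivAt h
    (Continuous.intervalIntegrable (by fun_prop) _ _)]
  simp

theorem expQuot_mono {p p' : ℝ × ℝ} (h : p.1 ≤ p'.1) : expQuot p ≤ expQuot p' := by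
  refine setIntegral_mono_on (expQuot_integrable _) (expQuot_integrable _) measurableSet_Ioo
    fun q hq => ?_
  have := hq.1
  dsimp only
  gcongr

theorem expQuot_pos (p : ℝ × ℝ) : 0 < expQuot p := by
  have h2 : 0 < expQuot (-(|p.1| + 1), p.2) := by
    have h1 := fst_mul_expQuot (-(|p.1| + 1), p.2)
    have h0 := abs_nonneg p.1
    have h3 : Real.exp (2 * -(|p.1| + 1)) < 1 := Real.exp_lt_one_iff.2 (by linarith)
    dsimp only at h1
    by_contra hcon
    nlinarith
  exact h2.trans_le (expQuot_mono (by dsimp only; linarith [neg_abs_le p.1]))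

theorem expQuot_ge {p : ℝ × ℝ} (h : p.1 ≤ -1) : 1 / 2 ≤ -p.1 * expQuot p := by
  have h1 := fst_mul_expQuot p
  have h2 : Real.exp (2 * p.1) ≤ 1 / 2 := by
    have h3 : Real.exp (2 * p.1) ≤ Real.exp (-1) := Real.exp_le_exp.2 (by linarith)
    have h4 := Real.exp_neg_one_lt_half
    linarith
  linarith

/-- The weighted average entering the Langer variable with density `φ`. -/
noncomputable def langerAvg (φ : ℝ × ℝ → ℝ) : ℝ × ℝ → ℝ :=
  wavg (fun q => 2 * q ^ 2) (fun q => q ^ 2) (fun _ => 0) (fun p => √(expQuot p) * φ p)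

/-- The Langer variable: up to constants, the signed power `2 / 3` of the primitive, vanishing at
`x = 0`, of `|exp (2 x) - 1| ^ (1 / 2) * φ`. -/
noncomputable def langer (φ : ℝ × ℝ → ℝ) (p : ℝ × ℝ) : ℝ := p.1 * langerAvg φ p ^ (2 / 3 : ℝ)

section langer

variable {φ : ℝ × ℝ → ℝ} {c : ℝ}

theorem expQuot_strip_ge (M : ℝ) : ∃ k > 0, ∀ p ∈ strip M, k ≤ expQuot p :=
  ⟨expQuot (-M, 0), expQuot_pos _, fun _ hp => expQuot_mono (abs_lt.1 hp).1.le⟩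

theorem sb_sqrt_expQuot (M : ℝ) : SB (strip M) (fun p => √(expQuot p)) := by
  obtain ⟨k, hk, h⟩ := expQuot_strip_ge M
  exact (sb_expQuot M).sqrt (isOpen_strip M) hk h

theorem sb_langer_density (hφ : ∀ M, SB (strip M) φ) (M : ℝ) :
    SB (strip M) (fun p => √(expQuot p) * φ p) :=
  (sb_sqrt_expQuot M).mul (isOpen_strip M) (hφ M)

theorem langer_weight_le : ∀ q ∈ Ioo (0 : ℝ) 1, |2 * q ^ 2| ≤ 2 := fun q hq => by
  have := sq_mem_unit hq
  rw [abs_of_nonneg (by linarith)]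
  linarith

theorem langer_scale_le : ∀ q ∈ Ioo (0 : ℝ) 1, |q ^ 2| ≤ 1 := fun q hq => by
  have := sq_mem_unit hq
  rw [abs_of_nonneg this.1]
  exact this.2

theorem sb_langerAvg (hφ : ∀ M, SB (strip M) φ) (M : ℝ) : SB (strip M) (langerAvg φ) :=
  .wavg (isOpen_strip M) langer_weight_le langer_scale_le (by fun_prop) (by fun_prop)
    continuousOn_const (fun _ hp _ hq => strip_maps (sq_mem_unit hq).1 (sq_mem_unit hq).2 hp)
    (sb_langer_density hφ M)

theorem langerAvg_ge (hφ : ∀ M, SB (strip M) φ) {p : ℝ × ℝ} {m : ℝ}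
    (hm : ∀ q ∈ Ioo (0 : ℝ) 1, m ≤ √(expQuot (q ^ 2 * p.1 + 0, p.2)) * φ (q ^ 2 * p.1 + 0, p.2)) :
    2 / 3 * m ≤ langerAvg φ p := by
  have h1 : ∫ q in Ioo (0 : ℝ) 1, 2 * q ^ 2 * m = 2 / 3 * m := by
    rw [setIntegral_Ioo_eq, intervalIntegral.integral_mul_const,
      intervalIntegral.integral_const_mul, integral_pow]
    norm_num
  rw [← h1]
  refine setIntegral_mono_on ((Continuous.integrableOn_Icc (by fun_prop)).mono_set
    Ioo_subset_Icc_self) ?_ measurableSet_Ioo fun q hq => ?_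
  · exact wavg_integrable langer_weight_le (by fun_prop) (by fun_prop) continuousOn_const
      (sb_langer_density hφ _).continuousOn (sb_langer_density hφ _).bddFun
      (fun q hq => strip_maps (sq_mem_unit hq).1 (sq_mem_unit hq).2 (mem_strip_self p))
  · have := hm q hq
    gcongr

theorem langerAvg_strip_ge (hφ : ∀ M, SB (strip M) φ) (hc : 0 < c) (hφc : ∀ p, c ≤ φ p) (M : ℝ) :
    ∃ k > 0, ∀ p ∈ strip M, k ≤ langerAvg φ p := by
  obtain ⟨k, hk, h⟩ := expQuot_strip_ge M
  refine ⟨2 / 3 * (√k * c), by positivity, fun p hp => langerAvg_ge hφ fun q hq => ?_⟩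
  have h1 := Real.sqrt_le_sqrt (h _ (strip_maps (sq_mem_unit hq).1 (sq_mem_unit hq).2 hp))
  exact mul_le_mul h1 (hφc _) hc.le (Real.sqrt_nonneg _)

theorem langerAvg_pos (hφ : ∀ M, SB (strip M) φ) (hc : 0 < c) (hφc : ∀ p, c ≤ φ p) (p : ℝ × ℝ) :
    0 < langerAvg φ p := by
  obtain ⟨k, hk, h⟩ := langerAvg_strip_ge hφ hc hφc (|p.1| + 1)
  exact hk.trans_le (h p (mem_strip_self p))

theorem sb_langer (hφ : ∀ M, SB (strip M) φ) (hc : 0 < c) (hφc : ∀ p, c ≤ φ p) (M : ℝ) :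
    SB (strip M) (langer φ) := by
  have hU := isOpen_strip M
  obtain ⟨k, hk, h⟩ := langerAvg_strip_ge hφ hc hφc M
  exact (sb_fst_strip M).mul hU ((sb_langerAvg hφ M).rpow hU (2 / 3) hk h)

theorem langerAvg_ode (hφ : ∀ M, SB (strip M) φ) (p : ℝ × ℝ) :
    3 / 2 * langerAvg φ p + p.1 * pdFst (langerAvg φ) p = √(expQuot p) * φ p := by
  set h : ℝ × ℝ → ℝ := fun p => √(expQuot p) * φ p with hh
  have hsb := sb_langer_density hφ (|p.1| + 1)
  have hp := mem_strip_self p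
  have hmaps : ∀ x ∈ strip (|p.1| + 1), ∀ q ∈ Ioo (0 : ℝ) 1,
      (q ^ 2 * x.1 + 0, x.2) ∈ strip (|p.1| + 1) :=
    fun _ hx _ hq => strip_maps (sq_mem_unit hq).1 (sq_mem_unit hq).2 hx
  have hpd := (wavg_hasPD (isOpen_strip _) langer_weight_le langer_scale_le (by fun_prop)
    (by fun_prop) continuousOn_const hmaps hsb hp).pdFst_eq
  change pdFst (langerAvg φ) p = _ at hpd
  rw [hpd]
  have i1 := wavg_integrable (p := p) langer_weight_le (by fun_prop) (by fun_prop)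
    continuousOn_const hsb.continuousOn hsb.bddFun (hmaps p hp)
  have i2 := wavg_integrable (p := p) (w := fun q => 2 * q ^ 2 * q ^ 2) (B := 2)
    (fun q hq => by
      rw [abs_mul]
      have h1 := langer_weight_le q hq
      have h2 := langer_scale_le q hq
      nlinarith [abs_nonneg (2 * q ^ 2), abs_nonneg (q ^ 2)]) (by fun_prop) (by fun_prop)
    continuousOn_const hsb.pdFst.continuousOn hsb.pdFst.bddFun (hmaps p hp)
  unfold langerAvg wavg
  rw [← integral_const_mul, ← integral_const_mul, ← integral_add (i1.const_mul _) (i2.const_mul _),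
    setIntegral_Ioo_eq]
  have hmem : ∀ q ∈ Icc (0 : ℝ) 1, (q ^ 2 * p.1 + 0, p.2) ∈ strip (|p.1| + 1) := fun q hq =>
    strip_maps (sq_nonneg q) (pow_le_one₀ hq.1 hq.2) hp
  have hcont : ContinuousOn (fun q : ℝ => q ^ 3 * h (q ^ 2 * p.1 + 0, p.2)) (Icc 0 1) := by
    refine ContinuousOn.mul (by fun_prop) (hsb.continuousOn.comp (by fun_prop) hmem)
  rw [intervalIntegral.integral_eq_sub_of_hasDerivAt_of_le zero_le_one hcont]
  · simp [hh]
  · intro q hq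
    have h1 := (hsb.hasPD (hmem q (Ioo_subset_Icc_self hq))).hasDerivAt_fst
    have h2 : HasDerivAt (fun q : ℝ => q ^ 2 * p.1 + 0) (2 * q * p.1) q := by
      simpa using ((hasDerivAt_pow 2 q).mul_const p.1)
    have h3 : HasDerivAt (fun q : ℝ => q ^ 3 * h (q ^ 2 * p.1 + 0, p.2))
        (((3 : ℕ) : ℝ) * q ^ 2 * h (q ^ 2 * p.1 + 0, p.2) +
          q ^ 3 * (pdFst h (q ^ 2 * p.1 + 0, p.2) * (2 * q * p.1))) q :=
      (hasDerivAt_pow 3 q).mul (HasDerivAt.comp (h₂ := fun y => h (y, p.2)) q h1 h2)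
    refine h3.congr_deriv ?_
    push_cast
    ring
  · rw [intervalIntegrable_iff_integrableOn_Ioo_of_le zero_le_one]
    exact (i1.const_mul _).add (i2.const_mul _)

theorem langer_hasPD (hφ : ∀ M, SB (strip M) φ) (hc : 0 < c) (hφc : ∀ p, c ≤ φ p) (p : ℝ × ℝ) :
    HasPD (langer φ) (2 / 3 * langerAvg φ p ^ (-1 / 3 : ℝ) * (√(expQuot p) * φ p))
      (pdSnd (langer φ) p) p := by
  have h := (sb_langer hφ hc hφc (|p.1| + 1)).hasPD (mem_strip_self p)
  refine h.cast ?_ rfl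
  have hA := (sb_langerAvg hφ (|p.1| + 1)).hasPD (mem_strip_self p)
  have hpos := langerAvg_pos hφ hc hφc p
  have h1 := HasPD.mul HasPD.fst
    (HasPD.comp_real (Real.hasDerivAt_rpow_const (p := 2 / 3) (Or.inl hpos.ne')) hA)
  have h2 := h1.pdFst_eq
  change pdFst (langer φ) p = _ at h2
  rw [h2, ← langerAvg_ode hφ p, show (2 / 3 - 1 : ℝ) = -1 / 3 by norm_num]
  have h3 : langerAvg φ p ^ (2 / 3 : ℝ) = langerAvg φ p ^ (-1 / 3 : ℝ) * langerAvg φ p := by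
    rw [← Real.rpow_add_one hpos.ne']; norm_num
  rw [h3]
  ring

theorem langer_mul_sq (hφ : ∀ M, SB (strip M) φ) (hc : 0 < c) (hφc : ∀ p, c ≤ φ p) (p : ℝ × ℝ) :
    langer φ p * pdFst (langer φ) p ^ 2 = 4 / 9 * (Real.exp (2 * p.1) - 1) * φ p ^ 2 := by
  have hpos := langerAvg_pos hφ hc hφc p
  rw [(langer_hasPD hφ hc hφc p).pdFst_eq, ← fst_mul_expQuot p]
  have h1 : langerAvg φ p ^ (2 / 3 : ℝ) * (langerAvg φ p ^ (-1 / 3 : ℝ)) ^ 2 = 1 := by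
    rw [← Real.rpow_natCast (langerAvg φ p ^ (-1 / 3 : ℝ)), ← Real.rpow_mul hpos.le,
      ← Real.rpow_add hpos]
    norm_num
  have h2 := Real.sq_sqrt (expQuot_pos p).le
  unfold langer
  linear_combination (4 / 9 * p.1 * √(expQuot p) ^ 2 * φ p ^ 2) * h1 +
    (4 / 9 * p.1 * φ p ^ 2) * h2

theorem langer_pdFst_ge (hφ : ∀ M, SB (strip M) φ) (hc : 0 < c) (hφc : ∀ p, c ≤ φ p) (M : ℝ) :
    ∃ k > 0, ∀ p ∈ strip M, k ≤ pdFst (langer φ) p := by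
  obtain ⟨C, hC⟩ := (sb_langerAvg hφ M).bddFun
  obtain ⟨k, hk, h⟩ := expQuot_strip_ge M
  refine ⟨2 / 3 * (max C 1) ^ (-1 / 3 : ℝ) * (√k * c), by positivity, fun p hp => ?_⟩
  rw [(langer_hasPD hφ hc hφc p).pdFst_eq]
  have h1 := langerAvg_pos hφ hc hφc p
  have h2 : langerAvg φ p ≤ max C 1 :=
    ((le_abs_self _).trans (hC p hp)).trans (le_max_left _ _)
  have h3 := Real.rpow_le_rpow_of_nonpos h1 h2 (by norm_num : (-1 / 3 : ℝ) ≤ 0)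
  have h4 := Real.sqrt_le_sqrt (h p hp)
  have h5 := hφc p
  gcongr

theorem langer_low (hφ : ∀ M, SB (strip M) φ) (hc : 0 < c) (hφc : ∀ p, c ≤ φ p) (N : ℝ) :
    ∃ M, ∀ p : ℝ × ℝ, p.1 ≤ M → langer φ p ≤ N := by
  have hd : 0 < 2 / 9 * c ^ 2 := by positivity
  refine ⟨-1 - (|N| ^ 3 / (2 / 9 * c ^ 2)), fun p hp => ?_⟩
  have hq : 0 ≤ |N| ^ 3 / (2 / 9 * c ^ 2) := by positivity
  have hx : p.1 ≤ -1 := by linarith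
  have h1 : 2 / 3 * (√(expQuot p) * c) ≤ langerAvg φ p := by
    refine langerAvg_ge hφ fun q hq => ?_
    refine mul_le_mul (Real.sqrt_le_sqrt (expQuot_mono ?_)) (hφc _) hc.le (Real.sqrt_nonneg _)
    have := sq_mem_unit hq
    simp only [add_zero]
    nlinarith
  have hpos := langerAvg_pos hφ hc hφc p
  have h2 : 4 / 9 * (expQuot p * c ^ 2) ≤ langerAvg φ p ^ 2 := by
    have := pow_le_pow_left₀ (by positivity) h1 2
    rw [mul_pow, mul_pow, Real.sq_sqrt (expQuot_pos p).le] at this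
    linarith
  have h3 : (-langer φ p) ^ 3 = (-p.1) ^ 3 * langerAvg φ p ^ 2 := by
    have : (langerAvg φ p ^ (2 / 3 : ℝ)) ^ 3 = langerAvg φ p ^ 2 := by
      rw [← Real.rpow_natCast, ← Real.rpow_mul hpos.le, ← Real.rpow_natCast]
      norm_num
    unfold langer
    rw [← this]
    ring
  have h4 := expQuot_ge hx
  have h5 : 2 / 9 * c ^ 2 * (-p.1) ^ 2 ≤ (-langer φ p) ^ 3 := by
    rw [h3]
    calc 2 / 9 * c ^ 2 * (-p.1) ^ 2 = (-p.1) ^ 2 * (4 / 9 * c ^ 2) * (1 / 2) := by ring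
      _ ≤ (-p.1) ^ 2 * (4 / 9 * c ^ 2) * (-p.1 * expQuot p) := by gcongr
      _ = (-p.1) ^ 3 * (4 / 9 * (expQuot p * c ^ 2)) := by ring
      _ ≤ (-p.1) ^ 3 * langerAvg φ p ^ 2 := by
        gcongr
        exact pow_nonneg (by linarith) 3
  have h6 : |N| ^ 3 ≤ 2 / 9 * c ^ 2 * (-p.1) ^ 2 := by
    have h7 : |N| ^ 3 / (2 / 9 * c ^ 2) ≤ (-p.1) ^ 2 := by nlinarith
    rwa [div_le_iff₀' hd] at h7
  have h8 : |N| ≤ -langer φ p := by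
    have hodd : StrictMono fun x : ℝ => x ^ 3 := Odd.strictMono_pow (by decide)
    exact hodd.le_iff_le.1 (h6.trans h5)
  linarith [neg_abs_le N]

end langer

/-- `S` is a Langer variable for the symbol `(1 - exp (-2 (u - γ))) * exp (2 u)`. -/
structure IsLangerVar (γ S : ℝ × ℝ → ℝ) : Prop where
  sb : ∀ M, SB (strip M) S
  pdFst_ge : ∀ M, ∃ k > 0, ∀ p ∈ strip M, k ≤ pdFst S p
  low : ∀ N, ∃ M, ∀ p : ℝ × ℝ, p.1 ≤ M → S p ≤ N
  eq_zero : ∀ p, p.1 = γ p → S p = 0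
  mul_sq : ∀ p, S p * pdFst S p ^ 2 =
    4 / 9 * (1 - Real.exp (-2 * (p.1 - γ p))) * Real.exp (2 * p.1)
  ge : ∀ M, ∃ k > 0, ∀ p ∈ strip M, 1 ≤ p.1 - γ p → k ≤ S p

section exists_langerVar

variable {γ : ℝ × ℝ → ℝ}

theorem hasPD_fst_sub (hγ : SB univ γ) (p : ℝ × ℝ) :
    HasPD (fun p => p.1 - γ p) (1 - pdFst γ p) (0 - pdSnd γ p) p :=
  HasPD.fst.sub (hγ.hasPD (mem_univ p))

theorem isBddDiffeo_fst_sub (hγ : SB univ γ) (hγ' : ∀ p, |pdFst γ p| ≤ 1 / 2) :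
    IsBddDiffeo (fun p => p.1 - γ p) := by
  refine ⟨fun a => ?_, fun a => ⟨1 / 2, by norm_num, fun p _ => ?_⟩, fun N => ?_⟩
  · exact ((hγ.mono (subset_univ _)).neg (isOpen_rightOf a)).congr (isOpen_rightOf a)
      fun p _ => by ring
  · rw [(hasPD_fst_sub hγ p).pdFst_eq]
    linarith [(abs_le.1 (hγ' p)).2]
  · obtain ⟨C, hC⟩ := hγ.bddFun
    refine ⟨N - C, fun p hp => ?_⟩
    linarith [(abs_le.1 (hC p (mem_univ p))).1]

theorem exists_langer_density (hγ : SB univ γ) (hγ' : ∀ p, |pdFst γ p| ≤ 1 / 2) :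
    ∃ φ : ℝ × ℝ → ℝ, ∃ c > 0, (∀ M, SB (strip M) φ) ∧ (∀ p, c ≤ φ p) ∧
      ∀ p : ℝ × ℝ, φ (p.1 - γ p, p.2) * (1 - pdFst γ p) = Real.exp (γ p) := by
  have hω := isBddDiffeo_fst_sub hγ hγ'
  obtain ⟨g, hg, hωg, hgω⟩ := hω.exists_inverse
  obtain ⟨C, hC⟩ := hγ.bddFun
  have hpd : ∀ p, pdFst g p = (1 - pdFst γ (g p, p.2))⁻¹ := fun p => by
    rw [(hω.hasPD_of_inverse hωg p).pdFst_eq, (hasPD_fst_sub hγ _).pdFst_eq]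
  refine ⟨fun p => Real.exp (g p - p.1) * pdFst g p, Real.exp (-C) * (3 / 2)⁻¹, by positivity,
    fun M => ?_, fun p => ?_, fun p => ?_⟩
  · have h := ((hg.sb (-M)).exp (isOpen_rightOf _)).mul (isOpen_rightOf _) (hg.sb_pdFst (-M))
    exact h.mono (strip_subset_rightOf M)
  · have h1 := hωg p.1 p.2
    have h2 := abs_le.1 (hC (g p, p.2) (mem_univ _))
    have h3 := abs_le.1 (hγ' (g p, p.2))
    dsimp only [Prod.mk.eta] at h1
    have h4 : Real.exp (-C) ≤ Real.exp (g p - p.1) := Real.exp_le_exp.2 (by linarith)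
    have h5 : (3 / 2 : ℝ)⁻¹ ≤ pdFst g p := by
      rw [hpd]
      exact inv_anti₀ (by linarith) (by linarith)
    exact mul_le_mul h4 h5 (by norm_num) (Real.exp_pos _).le
  · have h1 : g (p.1 - γ p, p.2) = p.1 := hgω p.1 p.2
    have h3 := abs_le.1 (hγ' p)
    have h4 : 1 - pdFst γ p ≠ 0 := by linarith
    dsimp only
    rw [hpd, h1, mul_assoc, Prod.mk.eta, inv_mul_cancel₀ h4]
    simp

theorem exists_isLangerVar (hγ : SB univ γ) (hγ' : ∀ p, |pdFst γ p| ≤ 1 / 2) :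
    ∃ S, IsLangerVar γ S := by
  obtain ⟨φ, c, hc, hφ, hφc, hφγ⟩ := exists_langer_density hγ hγ'
  obtain ⟨C, hC⟩ := hγ.bddFun
  have hC' := fun p => abs_le.1 (hC p (mem_univ p))
  have hmaps : ∀ M, ∀ p ∈ strip M, (p.1 - γ p, p.2) ∈ strip (M + C) := by
    intro M p hp
    have h1 := abs_lt.1 (show |p.1| < M from hp)
    have h2 := hC' p
    show |p.1 - γ p| < M + C
    exact abs_lt.2 ⟨by linarith, by linarith⟩
  have hpd : ∀ p, pdFst (fun p => langer φ (p.1 - γ p, p.2)) p =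
      pdFst (langer φ) (p.1 - γ p, p.2) * (1 - pdFst γ p) := fun p => by
    rw [(HasPD.comp_pair (langer_hasPD hφ hc hφc (p.1 - γ p, p.2)) (hasPD_fst_sub hγ p)
      HasPD.snd).pdFst_eq, (langer_hasPD hφ hc hφc (p.1 - γ p, p.2)).pdFst_eq]
    ring
  refine ⟨fun p => langer φ (p.1 - γ p, p.2), fun M => ?_, fun M => ?_, fun N => ?_, fun p hp => ?_,
    fun p => ?_, fun M => ?_⟩
  · have hU := isOpen_strip M
    exact SB.comp_pair hU (sb_langer hφ hc hφc (M + C)) (hmaps M)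
      (fun n => (PBddC.fst hU).sub hU ((hγ.mono (subset_univ _)).pBddC n)) (fun n => .snd hU)
  · obtain ⟨k, hk, h⟩ := langer_pdFst_ge hφ hc hφc (M + C)
    refine ⟨k * (1 / 2), by positivity, fun p hp => ?_⟩
    rw [hpd]
    have h1 := h _ (hmaps M p hp)
    have h2 := (abs_le.1 (hγ' p)).2
    exact mul_le_mul h1 (by linarith) (by norm_num) (hk.le.trans h1)
  · obtain ⟨M, hM⟩ := langer_low hφ hc hφc N
    refine ⟨M - C, fun p hp => hM _ ?_⟩
    have := hC' p
    dsimp only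
    linarith
  · simp [langer, hp]
  · rw [hpd, mul_pow, ← mul_assoc, langer_mul_sq hφ hc hφc, mul_assoc _ (_ ^ 2) (_ ^ 2), ← mul_pow,
      hφγ, ← Real.exp_nat_mul, mul_assoc, mul_assoc, sub_mul, sub_mul, ← Real.exp_add,
      ← Real.exp_add]
    push_cast
    ring_nf
  · obtain ⟨k, hk, h⟩ := langerAvg_strip_ge hφ hc hφc (M + C)
    refine ⟨k ^ (2 / 3 : ℝ), by positivity, fun p hp h1 => ?_⟩
    have h2 := Real.rpow_le_rpow hk.le (h _ (hmaps M p hp)) (by norm_num : (0 : ℝ) ≤ 2 / 3)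
    unfold langer
    have h3 : 0 < k ^ (2 / 3 : ℝ) := by positivity
    dsimp only
    nlinarith

end exists_langerVar

/-- The solution `exp u * ∫_u^∞ exp (-x) * m (x, t) dx` of the equation `a - a_u = m`. -/
noncomputable def tailAvg (m : ℝ × ℝ → ℝ) : ℝ × ℝ → ℝ :=
  wavg (fun _ => 1) (fun _ => 1) (fun q => -Real.log q) m

section tailAvg

variable {m : ℝ × ℝ → ℝ} {R : ℝ}

theorem tail_maps {p : ℝ × ℝ} (hp : p ∈ rightOf R) {q : ℝ} (h0 : 0 ≤ q) (h1 : q ≤ 1) :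
    (1 * p.1 + -Real.log q, p.2) ∈ rightOf R := by
  have h2 := Real.log_nonpos h0 h1
  have h3 : R < p.1 := hp
  show R < 1 * p.1 + -Real.log q
  linarith

theorem continuousOn_neg_log : ContinuousOn (fun q : ℝ => -Real.log q) (Ioo 0 1) :=
  fun _ hq => (Real.continuousAt_log hq.1.ne').neg.continuousWithinAt

theorem sb_tailAvg (hm : SB (rightOf R) m) : SB (rightOf R) (tailAvg m) :=
  .wavg (isOpen_rightOf R) (B := 1) (by simp) (by simp) continuousOn_const continuousOn_const
    continuousOn_neg_log (fun _ hp _ hq => tail_maps hp hq.1.le hq.2.le) hm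

theorem tailAvg_ode (hm : SB (rightOf R) m) {p : ℝ × ℝ} (hp : p ∈ rightOf R) :
    tailAvg m p - pdFst (tailAvg m) p = m p := by
  have hpd := (wavg_hasPD (isOpen_rightOf R) (B := 1) (w := fun _ => 1) (α := fun _ => 1)
    (β := fun q => -Real.log q) (by simp) (by simp) continuousOn_const continuousOn_const
    continuousOn_neg_log (fun _ hp _ hq => tail_maps hp hq.1.le hq.2.le) hm hp).pdFst_eq
  change pdFst (tailAvg m) p = _ at hpd
  rw [hpd]
  have i1 := wavg_integrable (p := p) (B := 1) (w := fun _ => 1) (α := fun _ => 1)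
    (β := fun q => -Real.log q) (by simp) continuousOn_const continuousOn_const
    continuousOn_neg_log hm.continuousOn hm.bddFun (fun _ hq => tail_maps hp hq.1.le hq.2.le)
  have i2 := wavg_integrable (p := p) (B := 1) (w := fun _ => 1 * 1) (α := fun _ => 1)
    (β := fun q => -Real.log q) (by simp) continuousOn_const continuousOn_const
    continuousOn_neg_log hm.pdFst.continuousOn hm.pdFst.bddFun
    (fun _ hq => tail_maps hp hq.1.le hq.2.le)
  unfold tailAvg wavg
  rw [← integral_sub i1 i2, setIntegral_Ioo_eq]
  have hcont : ContinuousOn (fun q : ℝ => q * m (1 * p.1 + -Real.log q, p.2)) (Icc 0 1) := by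
    intro q hq
    rcases hq.1.eq_or_lt with h0 | h0
    · subst h0
      obtain ⟨C, hC⟩ := hm.bddFun
      have hlim : Tendsto (fun q : ℝ => q * C) (𝓝[Icc 0 1] 0) (𝓝 0) := by
        have : ContinuousWithinAt (fun q : ℝ => q * C) (Icc 0 1) 0 := by fun_prop
        simpa [ContinuousWithinAt] using this
      have := squeeze_zero_norm' (f := fun q : ℝ => q * m (1 * p.1 + -Real.log q, p.2))
        (eventually_of_mem self_mem_nhdsWithin fun q hq => ?_) hlim
      · simpa [ContinuousWithinAt] using this
      · rw [Real.norm_eq_abs, abs_mul, abs_of_nonneg hq.1]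
        exact mul_le_mul_of_nonneg_left (hC _ (tail_maps hp hq.1 hq.2)) hq.1
    · have h1 : ContinuousAt m (1 * p.1 + -Real.log q, p.2) :=
        (hm.differentiableAt (tail_maps hp hq.1 hq.2)).continuousAt
      have h2 : ContinuousAt (fun q : ℝ => (1 * p.1 + -Real.log q, p.2)) q :=
        (continuousAt_const.add (Real.continuousAt_log h0.ne').neg).prodMk continuousAt_const
      exact (continuousAt_id.mul
        (ContinuousAt.comp (f := fun q : ℝ => (1 * p.1 + -Real.log q, p.2)) h1
          h2)).continuousWithinAt
  rw [intervalIntegral.integral_eq_sub_of_hasDerivAt_of_le zero_le_one hcont]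
  · simp
  · intro q hq
    have h1 := (hm.hasPD (tail_maps hp hq.1.le hq.2.le)).hasDerivAt_fst
    have h2 : HasDerivAt (fun q : ℝ => 1 * p.1 + -Real.log q) (-q⁻¹) q :=
      (Real.hasDerivAt_log hq.1.ne').neg.const_add _
    have h3 : HasDerivAt (fun q : ℝ => q * m (1 * p.1 + -Real.log q, p.2))
        (1 * m (1 * p.1 + -Real.log q, p.2) +
          q * (pdFst m (1 * p.1 + -Real.log q, p.2) * -q⁻¹)) q :=
      (hasDerivAt_id q).mul (HasDerivAt.comp (h₂ := fun y => m (y, p.2)) q h1 h2)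
    refine h3.congr_deriv ?_
    have := hq.1.ne'
    field_simp
    ring
  · rw [intervalIntegrable_iff_integrableOn_Ioo_of_le zero_le_one]
    exact i1.sub i2

end tailAvg

namespace IsLangerVar

variable {γ S : ℝ × ℝ → ℝ}

theorem hasPD (h : IsLangerVar γ S) (p : ℝ × ℝ) : HasPD S (pdFst S p) (pdSnd S p) p :=
  (h.sb _).hasPD (mem_strip_self p)

theorem pdFst_pos (h : IsLangerVar γ S) (p : ℝ × ℝ) : 0 < pdFst S p := by
  obtain ⟨k, hk, h'⟩ := h.pdFst_ge (|p.1| + 1)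
  exact hk.trans_le (h' p (mem_strip_self p))

theorem pos (h : IsLangerVar γ S) {p : ℝ × ℝ} (hp : 1 ≤ p.1 - γ p) : 0 < S p := by
  obtain ⟨k, hk, h'⟩ := h.ge (|p.1| + 1)
  exact hk.trans_le (h' p (mem_strip_self p) hp)

theorem exp_neg_two_mul_le {x : ℝ} (hx : 1 ≤ x) : Real.exp (-2 * x) ≤ 1 / 2 := by
  have h3 : Real.exp (-2 * x) ≤ Real.exp (-1) := Real.exp_le_exp.2 (by linarith)
  have h4 := Real.exp_neg_one_lt_half
  linarith

theorem sqrt_mul_pdFst (h : IsLangerVar γ S) {p : ℝ × ℝ} (hp : 1 ≤ p.1 - γ p) :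
    3 / 2 * S p ^ (1 / 2 : ℝ) * pdFst S p =
      √(1 - Real.exp (-2 * (p.1 - γ p))) * Real.exp p.1 := by
  have h0 := h.pos hp
  have h1 := exp_neg_two_mul_le hp
  have h2 := h.pdFst_pos p
  rw [← Real.sqrt_eq_rpow]
  refine (sq_eq_sq₀ (by positivity) (by positivity)).1 ?_
  rw [mul_pow, mul_pow, mul_pow, Real.sq_sqrt h0.le, Real.sq_sqrt (by linarith),
    ← Real.exp_nat_mul]
  have := h.mul_sq p
  push_cast
  linear_combination 9 / 4 * this

theorem exists_expansion (hγ : SB univ γ) (h : IsLangerVar γ S) :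
    ∃ R ≥ 0, ∃ c : ℝ → ℝ, ∃ a : ℝ × ℝ → ℝ, SB univ (fun p => c p.2) ∧ SB (rightOf R) a ∧
      ∀ p ∈ rightOf R, 1 ≤ p.1 - γ p ∧
        S p ^ (3 / 2 : ℝ) = Real.exp p.1 + c p.2 + Real.exp (-p.1) * a p := by
  obtain ⟨C, hC⟩ := hγ.bddFun
  have hC0 : 0 ≤ C := (abs_nonneg _).trans (hC 0 (mem_univ _))
  set R := C + 1 with hR
  have hU := isOpen_rightOf R
  have hω : ∀ p ∈ rightOf R, 1 ≤ p.1 - γ p := fun p hp => by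
    have h1 : R < p.1 := hp
    linarith [(abs_le.1 (hC p (mem_univ p))).2]
  have hγR : SB (rightOf R) γ := hγ.mono (subset_univ _)
  set D : ℝ × ℝ → ℝ := fun p => 1 - Real.exp (-2 * (p.1 - γ p)) with hD
  have hDge : ∀ p ∈ rightOf R, 1 / 2 ≤ D p := fun p hp => by
    have := exp_neg_two_mul_le (hω p hp)
    simp only [hD]
    linarith
  have hexp : ∀ {k : ℝ}, k ≤ 0 → SB (rightOf R) (fun p => Real.exp (k * p.1)) := fun {k} hk =>
    .exp_mul_fst hU k (C := 0) fun p hp => by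
      have h1 : R < p.1 := hp
      nlinarith
  have hDsb : SB (rightOf R) D := by
    refine ((SB.const hU 1).sub hU ((hexp (k := -2) (by norm_num)).mul hU
      ((hγR.const_mul hU 2).exp hU))).congr hU fun p _ => ?_
    simp only [hD]
    rw [← Real.exp_add]
    ring_nf
  have hsq := hDsb.sqrt hU (by norm_num) hDge
  set m : ℝ × ℝ → ℝ := fun p => Real.exp (2 * γ p) * (1 + √(D p))⁻¹ with hm
  have hmsb : SB (rightOf R) m := ((hγR.const_mul hU 2).exp hU).mul hU
    (((SB.const hU 1).add hU hsq).inv hU zero_lt_one fun p _ => by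
      linarith [Real.sqrt_nonneg (D p)])
  set K : ℝ × ℝ → ℝ := fun p => S p ^ (3 / 2 : ℝ) - Real.exp p.1 - Real.exp (-1 * p.1) * tailAvg m p
    with hK
  have hKpd : ∀ p ∈ rightOf R, HasPD K 0 (pdSnd K p) p := by
    intro p hp
    have h0 := h.pos (hω p hp)
    have h1 := HasPD.comp_real (Real.hasDerivAt_rpow_const (p := 3 / 2) (Or.inl h0.ne')) (h.hasPD p)
    have h2 := HasPD.comp_real (f := Prod.fst) (Real.hasDerivAt_exp p.1) (HasPD.fst (p := p))
    have h3 := HasPD.comp_real (Real.hasDerivAt_exp (-1 * p.1)) ((HasPD.const (-1)).mul HasPD.fst)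
    have h4 := h3.mul ((sb_tailAvg hmsb).hasPD hp)
    have h5 := (h1.sub h2).sub h4
    change HasPD K _ _ p at h5
    refine h5.cast ?_ h5.pdSnd_eq.symm
    have h6 := tailAvg_ode hmsb hp
    have h7 : _ = √(D p) * Real.exp p.1 := h.sqrt_mul_pdFst (hω p hp)
    have h8 : √(D p) ^ 2 = 1 - Real.exp (-2 * (p.1 - γ p)) :=
      Real.sq_sqrt ((by norm_num : (0 : ℝ) ≤ 1 / 2).trans (hDge p hp))
    have h9 : Real.exp (-1 * p.1) * m p = (1 - √(D p)) * Real.exp p.1 := by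
      have h10 : 1 + √(D p) ≠ 0 := by positivity
      simp only [hm]
      rw [← mul_assoc, ← div_eq_mul_inv, div_eq_iff h10]
      have h11 : Real.exp (-1 * p.1) * Real.exp (2 * γ p) =
          Real.exp (-2 * (p.1 - γ p)) * Real.exp p.1 := by
        rw [← Real.exp_add, ← Real.exp_add]
        ring_nf
      rw [h11]
      linear_combination Real.exp p.1 * h8
    rw [show (3 / 2 - 1 : ℝ) = 1 / 2 by norm_num, h7]
    linear_combination Real.exp (-1 * p.1) * h6 + h9
  have hKc : ∀ p ∈ rightOf R, K p = K (R + 1, p.2) := by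
    intro p hp
    have hder : ∀ u ∈ Ioi R, HasDerivAt (fun u => K (u, p.2)) 0 u := fun u hu =>
      (hKpd (u, p.2) hu).hasDerivAt_fst
    exact isOpen_Ioi.is_const_of_deriv_eq_zero isPreconnected_Ioi
      (fun u hu => (hder u hu).differentiableAt.differentiableWithinAt)
      (fun u hu => (hder u hu).deriv) (show p.1 ∈ Ioi R from hp)
      (show R + 1 ∈ Ioi R by simp)
  refine ⟨R, by linarith, fun t => K (R + 1, t), tailAvg m, ?_, sb_tailAvg hmsb, fun p hp =>
    ⟨hω p hp, ?_⟩⟩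
  · set W := strip (R + 2) ∩ rightOf R
    have hW : IsOpen W := (isOpen_strip _).inter hU
    obtain ⟨k, hk, hSk⟩ := h.ge (R + 2)
    have hS : SB W (fun p => S p ^ (3 / 2 : ℝ)) :=
      ((h.sb (R + 2)).mono inter_subset_left).rpow hW _ hk fun p hp => hSk p hp.1 (hω p hp.2)
    have hKW : SB W K := by
      refine (hS.sub hW (((sb_exp_strip 1 (R + 2)).mono inter_subset_left).congr hW
        fun p _ => by rw [one_mul])).sub hW ?_
      exact (((hexp (k := -1) (by norm_num)).mul hU (sb_tailAvg hmsb)).mono inter_subset_right)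
    refine SB.comp_pair isOpen_univ (f := fun _ => R + 1) hKW (fun p _ => ⟨?_, ?_⟩)
      (fun n => .const isOpen_univ _) (fun n => .snd isOpen_univ)
    · show |R + 1| < R + 2
      rw [abs_of_nonneg (by linarith)]
      linarith
    · show R < R + 1
      linarith
  · have h1 := hKc p hp
    simp only [hK] at h1 ⊢
    rw [← h1, neg_one_mul]
    ring

end IsLangerVar

theorem rightOf_subset (a R : ℝ) : rightOf a ⊆ strip (max |a| |R| + 1) ∪ rightOf R := by
  intro p hp
  by_cases hR : R < p.1
  · exact Or.inr hR
  · have h1 : a < p.1 := hp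
    refine Or.inl (show |p.1| < _ from abs_lt.2 ⟨?_, ?_⟩)
    · linarith [neg_abs_le a, le_max_left |a| |R|]
    · linarith [le_abs_self R, le_max_right |a| |R|]

theorem Real.arsinh_eq_of_pos {x : ℝ} (hx : 0 < x) :
    Real.arsinh x = Real.log x + Real.log (1 + √(1 + (x ^ 2)⁻¹)) := by
  rw [← Real.log_mul hx.ne' (by positivity), Real.arsinh]
  congr 1
  have : √(1 + x ^ 2) = x * √(1 + (x ^ 2)⁻¹) := by
    rw [← Real.sqrt_sq hx.le, ← Real.sqrt_mul (sq_nonneg x), Real.sqrt_sq hx.le]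
    congr 1
    field_simp
    ring
  rw [this]
  ring

namespace IsLangerVar

variable {γ S : ℝ × ℝ → ℝ}

theorem exists_tail (hγ : SB univ γ) (h : IsLangerVar γ S) :
    ∃ R ≥ 0, ∃ X : ℝ × ℝ → ℝ, SB (rightOf R) X ∧ ∀ p ∈ rightOf R, 1 ≤ p.1 - γ p ∧ |X p| ≤ 1 / 2 ∧
        S p ^ (3 / 2 : ℝ) = Real.exp p.1 * (1 + X p) := by
  obtain ⟨R, hR0, c, a, hc, ha, hS⟩ := h.exists_expansion hγ
  obtain ⟨C, hC⟩ := hc.bddFun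
  obtain ⟨A, hA⟩ := ha.bddFun
  set R' := max R (2 * (C + A)) with hR'
  have hRR : R ≤ R' := le_max_left _ _
  have hU := isOpen_rightOf R'
  have hsub : rightOf R' ⊆ rightOf R := fun p hp => lt_of_le_of_lt hRR hp
  have hexp : ∀ {k : ℝ}, k ≤ 0 → SB (rightOf R') (fun p => Real.exp (k * p.1)) := fun {k} hk =>
    .exp_mul_fst hU k (C := 0) fun p hp => by
      have h1 : R' < p.1 := hp
      nlinarith
  refine ⟨R', hR0.le.trans hRR, fun p => Real.exp (-1 * p.1) * (c p.2 + Real.exp (-1 * p.1) * a p),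
    (hexp (by norm_num)).mul hU ((hc.mono (subset_univ _)).add hU
      ((hexp (by norm_num)).mul hU (ha.mono hsub))), fun p hp => ?_⟩
  obtain ⟨h1, h2⟩ := hS p (hsub hp)
  have h3 : R' < p.1 := hp
  have h4 : 2 * (C + A) ≤ R' := le_max_right _ _
  have h5 := hC p (mem_univ p)
  have h6 := hA p (hsub hp)
  refine ⟨h1, ?_, ?_⟩
  · have h7 : Real.exp (-1 * p.1) ≤ 1 := Real.exp_le_one_iff.2 (by linarith)
    have h8 : |c p.2 + Real.exp (-1 * p.1) * a p| ≤ C + A := by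
      refine (abs_add_le _ _).trans (add_le_add h5 ?_)
      rw [abs_mul, abs_of_pos (Real.exp_pos _)]
      exact (mul_le_of_le_one_left (abs_nonneg _) h7).trans h6
    rw [neg_one_mul, Real.exp_neg] at h8
    rw [abs_mul, abs_of_pos (Real.exp_pos _), neg_one_mul, Real.exp_neg,
      inv_mul_le_iff₀ (Real.exp_pos _)]
    linarith [Real.add_one_le_exp p.1]
  · dsimp only
    rw [h2, neg_one_mul, Real.exp_neg]
    have := (Real.exp_pos p.1).ne'
    field_simp
    ring

theorem hasPD_arsinh (h : IsLangerVar γ S) (p : ℝ × ℝ) :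
    HasPD (fun p => 3 / 2 * Real.arsinh (S p)) (3 / 2 * (√(1 + S p ^ 2))⁻¹ * pdFst S p)
      (3 / 2 * (√(1 + S p ^ 2))⁻¹ * pdSnd S p) p :=
  HasPD.comp_real (φ := fun x => 3 / 2 * Real.arsinh x)
    ((Real.hasDerivAt_arsinh _).const_mul _) (h.hasPD p)

theorem sb_tail_arsinh (hγ : SB univ γ) (h : IsLangerVar γ S) :
    ∃ R, SB (rightOf R) (fun p => 3 / 2 * Real.arsinh (S p) - p.1) ∧
      ∃ c > 0, ∀ p ∈ rightOf R, c ≤ pdFst (fun p => 3 / 2 * Real.arsinh (S p)) p := by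
  obtain ⟨R, hR0, X, hX, hS⟩ := h.exists_tail hγ
  have hU := isOpen_rightOf R
  have hS' : ∀ p ∈ rightOf R, S p = Real.exp p.1 ^ (2 / 3 : ℝ) * (1 + X p) ^ (2 / 3 : ℝ) := by
    intro p hp
    obtain ⟨h1, h2, h3⟩ := hS p hp
    have h0 := h.pos h1
    rw [← Real.mul_rpow (Real.exp_pos _).le (by linarith [(abs_le.1 h2).1]), ← h3,
      ← Real.rpow_mul h0.le]
    norm_num
  have h1X : ∀ p ∈ rightOf R, 1 / 2 ≤ 1 + X p := fun p hp => by
    linarith [(abs_le.1 (hS p hp).2.1).1]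
  have hX1 := (SB.const hU 1).add hU hX
  refine ⟨R, ?_, 1 / 5, by norm_num, fun p hp => ?_⟩
  · set Y : ℝ × ℝ → ℝ := fun p => Real.exp (-4 / 3 * p.1) * (1 + X p) ^ (-4 / 3 : ℝ) with hY
    have hYsb : SB (rightOf R) Y := by
      refine SB.mul hU (.exp_mul_fst hU _ (C := 0) fun p hp => ?_) (hX1.rpow hU _ (by norm_num) h1X)
      have h1 : R < p.1 := hp
      linarith
    have hY0 : ∀ p ∈ rightOf R, 0 ≤ Y p := fun p hp => by
      have := h1X p hp
      exact mul_nonneg (Real.exp_pos _).le (Real.rpow_nonneg (by linarith) _)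
    have hsq := ((SB.const hU 1).add hU hYsb).sqrt hU zero_lt_one fun p hp => by
      linarith [hY0 p hp]
    refine ((hX1.log hU (by norm_num) h1X).add hU ((((SB.const hU 1).add hU hsq).log hU zero_lt_one
      fun p _ => by linarith [Real.sqrt_nonneg (1 + Y p)]).const_mul hU (3 / 2))).congr hU
      fun p hp => ?_
    have h2 : 0 < 1 + X p := by linarith [h1X p hp]
    have h3 : ((S p) ^ 2)⁻¹ = Y p := by
      rw [hS' p hp, mul_pow, ← Real.exp_mul, ← Real.exp_nat_mul, ← Real.rpow_natCast,
        ← Real.rpow_mul h2.le, mul_inv, ← Real.exp_neg, ← Real.rpow_neg h2.le]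
      simp only [hY]
      congr 2
      · push_cast
        ring
      · norm_num
    rw [Real.arsinh_eq_of_pos (h.pos (hS p hp).1), h3, hS' p hp,
      Real.log_mul (by positivity) (by positivity), Real.log_rpow (Real.exp_pos _),
      Real.log_rpow h2, Real.log_exp]
    ring
  · obtain ⟨h1, h2, h3⟩ := hS p hp
    have h0 := h.pos h1
    have hp0 := h.pdFst_pos p
    have hX' := abs_le.1 h2
    rw [(h.hasPD_arsinh p).pdFst_eq]
    have h4 : S p ^ 3 = Real.exp (2 * p.1) * (1 + X p) ^ 2 := by
      have : S p ^ 3 = (S p ^ (3 / 2 : ℝ)) ^ 2 := by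
        rw [← Real.rpow_natCast (S p ^ (3 / 2 : ℝ)), ← Real.rpow_mul h0.le, ← Real.rpow_natCast]
        norm_num
      rw [this, h3, mul_pow, ← Real.exp_nat_mul]
      norm_num
    have h5 : (1 : ℝ) ≤ Real.exp (2 * p.1) := by
      rw [Real.one_le_exp_iff]
      have h1 : R < p.1 := hp
      linarith
    have h6 : (1 + X p) ^ 2 ≤ 9 / 4 := by nlinarith
    have h7 : 1 / 4 ≤ (1 + X p) ^ 2 := by nlinarith
    have h8 : 1 / 2 ≤ S p := by
      by_contra hcon
      have : S p ^ 3 < (1 / 2) ^ 3 := pow_lt_pow_left₀ (not_le.1 hcon) h0.le (by norm_num)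
      nlinarith
    have h9 : S p * (1 + S p ^ 2) ≤ 5 * S p ^ 3 := by
      have : 1 ≤ 4 * S p ^ 2 := by nlinarith
      nlinarith
    have h10 : S p * (1 + S p ^ 2) ≤ 45 / 4 * Real.exp (2 * p.1) := by nlinarith
    have h11 := exp_neg_two_mul_le h1
    have h12 := h.mul_sq p
    have h13 : 2 / 9 * Real.exp (2 * p.1) ≤ S p * pdFst S p ^ 2 := by
      rw [h12]
      nlinarith [Real.exp_pos (2 * p.1)]
    have h14 : 8 / 405 * (1 + S p ^ 2) ≤ pdFst S p ^ 2 := by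
      have : S p * (8 / 405 * (1 + S p ^ 2)) ≤ S p * pdFst S p ^ 2 := by nlinarith
      exact le_of_mul_le_mul_left this h0
    have h15 : √(1 + S p ^ 2) ≤ 15 / 2 * pdFst S p := by
      rw [Real.sqrt_le_left (by positivity)]
      nlinarith [sq_nonneg (S p)]
    have h16 : 0 < √(1 + S p ^ 2) := by positivity
    rw [mul_assoc, inv_mul_eq_div, ← mul_div_assoc, le_div_iff₀ h16]
    linarith

theorem isBddDiffeo (hγ : SB univ γ) (h : IsLangerVar γ S) :
    IsBddDiffeo (fun p => 3 / 2 * Real.arsinh (S p)) := by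
  obtain ⟨R, hR, c, hc, hRc⟩ := h.sb_tail_arsinh hγ
  refine ⟨fun a => ?_, fun a => ?_, fun N => ?_⟩
  · set M := max |a| |R| + 1
    have hU := isOpen_strip M
    refine SB.mono (SB.union ?_ hR) (rightOf_subset a R)
    exact (((h.sb M).comp_contDiff hU Real.contDiff_arsinh).const_mul hU _).sub hU (sb_fst_strip M)
  · obtain ⟨k, hk, hSk⟩ := h.pdFst_ge (max |a| |R| + 1)
    obtain ⟨C, hC⟩ := (h.sb (max |a| |R| + 1)).bddFun
    refine ⟨min c (3 / 2 * (√(1 + C ^ 2))⁻¹ * k), by positivity, fun p hp => ?_⟩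
    rcases rightOf_subset a R hp with h1 | h1
    · refine (min_le_right _ _).trans ?_
      rw [(h.hasPD_arsinh p).pdFst_eq]
      have h2 := hSk p h1
      have h3 : S p ^ 2 ≤ C ^ 2 := sq_le_sq' (abs_le.1 (hC p h1)).1 (abs_le.1 (hC p h1)).2
      gcongr
    · exact (min_le_left _ _).trans (hRc p h1)
  · obtain ⟨M, hM⟩ := h.low (Real.sinh (2 / 3 * N))
    refine ⟨M, fun p hp => ?_⟩
    have h1 := Real.arsinh_le_arsinh.2 (hM p hp)
    rw [Real.arsinh_sinh] at h1
    linarith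

/-- The transition map between two Langer variables. -/
theorem exists_transition {γ₁ γ₂ S₁ S₂ : ℝ × ℝ → ℝ} (hγ₁ : SB univ γ₁) (hγ₂ : SB univ γ₂)
    (h₁ : IsLangerVar γ₁ S₁) (h₂ : IsLangerVar γ₂ S₂) :
    ∃ v, IsBddDiffeo v ∧ ∀ p, S₂ (v p, p.2) = S₁ p := by
  obtain ⟨g, hg, hLg, -⟩ := (h₂.isBddDiffeo hγ₂).exists_inverse
  refine ⟨_, hg.comp (h₁.isBddDiffeo hγ₁), fun p => ?_⟩
  have := hLg (3 / 2 * Real.arsinh (S₁ p)) p.2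
  exact Real.arsinh_injective (by linarith)

theorem injective (hγ : SB univ γ) (h : IsLangerVar γ S) {x y t : ℝ} (hxy : S (x, t) = S (y, t)) :
    x = y := by
  refine ((h.isBddDiffeo hγ).strictMono t).injective ?_
  simp only [hxy]

theorem transition_ode {γ₁ γ₂ S₁ S₂ v : ℝ × ℝ → ℝ} (h₁ : IsLangerVar γ₁ S₁)
    (h₂ : IsLangerVar γ₂ S₂) (hv : IsBddDiffeo v) (hS : ∀ p, S₂ (v p, p.2) = S₁ p) (p : ℝ × ℝ) :
    (1 - Real.exp (-2 * (p.1 - γ₁ p))) * Real.exp (2 * p.1) =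
      (1 - Real.exp (-2 * (v p - γ₂ (v p, p.2)))) * Real.exp (2 * v p) * pdFst v p ^ 2 := by
  have h3 := (HasPD.comp_pair (h₂.hasPD (v p, p.2)) (hv.hasPD p) HasPD.snd).pdFst_eq
  simp only [hS, mul_zero, add_zero] at h3
  have h4 := h₁.mul_sq p
  have h5 := h₂.mul_sq (v p, p.2)
  change pdFst S₁ p = _ at h3
  rw [h3, ← hS p, mul_pow, ← mul_assoc, h5] at h4
  dsimp only at h4
  linarith

/-- The asymptotic expansion of the transition map at infinity. -/
theorem transition_expansion {γ₁ γ₂ S₁ S₂ : ℝ × ℝ → ℝ} (hγ₁ : SB univ γ₁) (hγ₂ : SB univ γ₂)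
    (h₁ : IsLangerVar γ₁ S₁) (h₂ : IsLangerVar γ₂ S₂) :
    ∃ c : ℝ → ℝ, SB univ (fun p => c p.2) ∧
      (∀ v, IsBddDiffeo v → (∀ p, S₂ (v p, p.2) = S₁ p) → ∀ a, SB (rightOf a)
        (fun p => Real.exp p.1 * (Real.exp (v p) - Real.exp p.1 - c p.2))) ∧
      ∀ v, IsBddDiffeo v → (∀ p, S₁ (v p, p.2) = S₂ p) → ∀ a, SB (rightOf a)
        (fun p => Real.exp p.1 * (Real.exp (v p) - Real.exp p.1 + c p.2)) := by
  obtain ⟨R₁, -, c₁, a₁, hc₁, ha₁, hS₁⟩ := h₁.exists_expansion hγ₁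
  obtain ⟨R₂, -, c₂, a₂, hc₂, ha₂, hS₂⟩ := h₂.exists_expansion hγ₂
  have key : ∀ {S₁ S₂ v a₁ a₂ : ℝ × ℝ → ℝ} {c₁ c₂ : ℝ → ℝ} {R₁ R₂ : ℝ},
      SB univ (fun p : ℝ × ℝ => c₁ p.2) → SB univ (fun p : ℝ × ℝ => c₂ p.2) →
      SB (rightOf R₁) a₁ → SB (rightOf R₂) a₂ →
      (∀ p ∈ rightOf R₁, S₁ p ^ (3 / 2 : ℝ) =
        Real.exp p.1 + c₁ p.2 + Real.exp (-p.1) * a₁ p) →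
      (∀ p ∈ rightOf R₂, S₂ p ^ (3 / 2 : ℝ) =
        Real.exp p.1 + c₂ p.2 + Real.exp (-p.1) * a₂ p) → IsBddDiffeo v →
      (∀ p, S₂ (v p, p.2) = S₁ p) → ∀ a, SB (rightOf a)
        (fun p => Real.exp p.1 * (Real.exp (v p) - Real.exp p.1 - (c₁ p.2 - c₂ p.2))) := by
    intro S₁ S₂ v a₁ a₂ c₁ c₂ R₁ R₂ hc₁ hc₂ ha₁ ha₂ hS₁ hS₂ hv hS a
    obtain ⟨C, hC⟩ := (hv.sb 0).bddFun
    set R := max 0 (max R₁ (R₂ + C)) with hR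
    have hR1 : R₁ ≤ R := (le_max_left _ _).trans (le_max_right _ _)
    have hR2 : R₂ + C ≤ R := (le_max_right _ _).trans (le_max_right _ _)
    have hmaps : ∀ p ∈ rightOf R, (v p, p.2) ∈ rightOf R₂ := by
      intro p hp
      have h1 : R < p.1 := hp
      have h2 := (abs_le.1 (hC p (show 0 < p.1 from (le_max_left _ _).trans_lt h1))).1
      show R₂ < v p
      linarith
    refine SB.mono (SB.union ?_ ?_) (rightOf_subset a R)
    · set M := max |a| |R| + 1
      have hU := isOpen_strip M
      have he : SB (strip M) (fun p => Real.exp p.1) :=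
        (sb_exp_strip 1 M).congr hU fun p _ => by rw [one_mul]
      have hev : SB (strip M) (fun p => Real.exp (v p)) :=
        ((((hv.sb (-M)).mono (strip_subset_rightOf M)).exp hU).mul hU he).congr hU fun p _ => by
          rw [← Real.exp_add, sub_add_cancel]
      exact he.mul hU ((hev.sub hU he).sub hU
        ((hc₁.mono (subset_univ _)).sub hU (hc₂.mono (subset_univ _))))
    · have hU := isOpen_rightOf R
      have h1 : SB (rightOf R) a₁ := ha₁.mono fun p hp => lt_of_le_of_lt hR1 hp
      have h2 : SB (rightOf R) (fun p => a₂ (v p, p.2)) :=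
        SB.comp_pair hU ha₂ hmaps (hv.pBddC R) (fun _ => .snd hU)
      refine (h1.sub hU ((((hv.sb R).neg hU).exp hU).mul hU h2)).congr hU fun p hp => ?_
      have h3 := hS₁ p (lt_of_le_of_lt hR1 hp)
      have h4 := hS₂ _ (hmaps p hp)
      rw [hS p, h3] at h4
      dsimp only at h4
      have h5 : Real.exp (-(v p - p.1)) = Real.exp p.1 * Real.exp (-v p) := by
        rw [← Real.exp_add]
        ring_nf
      have h6 : Real.exp p.1 * Real.exp (-p.1) = 1 := by rw [← Real.exp_add]; simp
      rw [h5]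
      linear_combination Real.exp p.1 * h4 - a₁ p * h6
  refine ⟨fun t => c₁ t - c₂ t, (hc₁.sub isOpen_univ hc₂), fun v hv hS a => ?_,
    fun v hv hS a => ?_⟩
  · exact key hc₁ hc₂ ha₁ ha₂ (fun p hp => (hS₁ p hp).2) (fun p hp => (hS₂ p hp).2) hv hS a
  · refine (key hc₂ hc₁ ha₂ ha₁ (fun p hp => (hS₂ p hp).2) (fun p hp => (hS₁ p hp).2) hv hS
      a).congr (isOpen_rightOf a) fun p _ => ?_
    ring

end IsLangerVar

section transfer

variable {D Ω : Set (ℝ × ℝ)} {F : ℝ × ℝ → ℝ} {f : ℝ → ℝ → ℝ}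

theorem exists_iteratedDeriv_fst_eq (hD : IsOpen D) (hF : SB D F) (hΩ : IsOpen Ω)
    (hpos : ∀ p ∈ Ω, 0 < p.1) (hmaps : ∀ p ∈ Ω, (Real.log p.1, Real.log p.2) ∈ D) {m : ℝ}
    (hf : ∀ p ∈ Ω, f p.1 p.2 = p.1 ^ m * F (Real.log p.1, Real.log p.2)) (ℓ : ℕ) :
    ∃ G, SB D G ∧ ∀ p ∈ Ω, iteratedDeriv ℓ (fun y => f y p.2) p.1 =
      p.1 ^ (m - ℓ) * G (Real.log p.1, Real.log p.2) := by
  induction ℓ with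
  | zero => exact ⟨F, hF, fun p hp => by simpa using hf p hp⟩
  | succ ℓ ih =>
    obtain ⟨G, hG, h⟩ := ih
    refine ⟨fun p => (m - ℓ) * G p + pdFst G p, (hG.const_mul hD _).add hD hG.pdFst, fun p hp => ?_⟩
    have hy := hpos p hp
    have h1 : iteratedDeriv ℓ (fun y => f y p.2) =ᶠ[𝓝 p.1]
        fun y => y ^ (m - ℓ) * G (Real.log y, Real.log p.2) := by
      have : ∀ᶠ y in 𝓝 p.1, (y, p.2) ∈ Ω :=
        (Continuous.prodMk_left p.2).continuousAt.eventually (hΩ.mem_nhds hp)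
      filter_upwards [this] with y hy using h _ hy
    have h2 : HasDerivAt (fun y => G (Real.log y, Real.log p.2))
        (pdFst G (Real.log p.1, Real.log p.2) * p.1⁻¹) p.1 :=
      HasDerivAt.comp (h₂ := fun x => G (x, Real.log p.2)) p.1
        (hG.hasPD (hmaps p hp)).hasDerivAt_fst (Real.hasDerivAt_log hy.ne')
    rw [iteratedDeriv_succ, h1.deriv_eq,
      ((Real.hasDerivAt_rpow_const (p := m - ℓ) (Or.inl hy.ne')).fun_mul h2).deriv]
    push_cast
    rw [← sub_sub, Real.rpow_sub_one hy.ne']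
    field_simp

theorem exists_iteratedDeriv_snd_eq (hD : IsOpen D) (hF : SB D F) (hΩ : IsOpen Ω)
    (hpos : ∀ p ∈ Ω, 0 < p.2) (hmaps : ∀ p ∈ Ω, (Real.log p.1, Real.log p.2) ∈ D) {m : ℝ}
    (hf : ∀ p ∈ Ω, f p.1 p.2 = p.1 ^ m * F (Real.log p.1, Real.log p.2)) (k : ℕ) :
    ∃ G, SB D G ∧ ∀ p ∈ Ω, iteratedDeriv k (fun E => f p.1 E) p.2 =
      p.2 ^ (-(k : ℝ)) * (p.1 ^ m * G (Real.log p.1, Real.log p.2)) := by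
  induction k with
  | zero => exact ⟨F, hF, fun p hp => by simpa using hf p hp⟩
  | succ k ih =>
    obtain ⟨G, hG, h⟩ := ih
    refine ⟨fun p => -(k : ℝ) * G p + pdSnd G p, (hG.const_mul hD _).add hD hG.pdSnd,
      fun p hp => ?_⟩
    have hy := hpos p hp
    have h1 : iteratedDeriv k (fun E => f p.1 E) =ᶠ[𝓝 p.2]
        fun E => E ^ (-(k : ℝ)) * (p.1 ^ m * G (Real.log p.1, Real.log E)) := by
      have : ∀ᶠ E in 𝓝 p.2, (p.1, E) ∈ Ω :=
        (Continuous.prodMk_right p.1).continuousAt.eventually (hΩ.mem_nhds hp)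
      filter_upwards [this] with E hE using h _ hE
    have h2 : HasDerivAt (fun E => G (Real.log p.1, Real.log E))
        (pdSnd G (Real.log p.1, Real.log p.2) * p.2⁻¹) p.2 :=
      HasDerivAt.comp (h₂ := fun x => G (Real.log p.1, x)) p.2
        (hG.hasPD (hmaps p hp)).hasDerivAt_snd (Real.hasDerivAt_log hy.ne')
    rw [iteratedDeriv_succ, h1.deriv_eq,
      ((Real.hasDerivAt_rpow_const (p := -(k : ℝ)) (Or.inl hy.ne')).fun_mul
        (h2.const_mul _)).deriv]
    push_cast
    rw [neg_add, ← sub_eq_add_neg, Real.rpow_sub_one hy.ne']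
    field_simp

/-- Bounded derivatives in logarithmic variables amount to symbol bounds. -/
theorem SB.symbol_bound (hD : IsOpen D) (hF : SB D F) (hΩ : IsOpen Ω)
    (hpos : ∀ p ∈ Ω, 0 < p.1 ∧ 0 < p.2) (hmaps : ∀ p ∈ Ω, (Real.log p.1, Real.log p.2) ∈ D) {m : ℝ}
    (hf : ∀ p ∈ Ω, f p.1 p.2 = p.1 ^ m * F (Real.log p.1, Real.log p.2)) {J : Set ℝ}
    (hJ : IsOpen J) {s : ℝ → Set ℝ} (hs : ∀ p ∈ Ω, p.2 ∈ J ∧ p.1 ∈ s p.2 ∧ IsOpen (s p.2))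
    (k ℓ : ℕ) :
    ∃ C > 0, ∀ p ∈ Ω, |iteratedDerivWithin k
      (fun E => iteratedDerivWithin ℓ (fun y => f y E) (s E) p.1) J p.2| ≤
        C * (p.2 ^ (-(k : ℝ)) * p.1 ^ (m - ℓ)) := by
  obtain ⟨G, hG, h1⟩ := exists_iteratedDeriv_fst_eq hD hF hΩ (fun p hp => (hpos p hp).1) hmaps hf ℓ
  obtain ⟨H, hH, h2⟩ := exists_iteratedDeriv_snd_eq (m := m - ℓ)
    (f := fun y E => iteratedDerivWithin ℓ (fun y => f y E) (s E) y) hD hG hΩ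
    (fun p hp => (hpos p hp).2) hmaps (fun p hp => by
      rw [← h1 p hp]
      exact iteratedDerivWithin_of_isOpen (hs p hp).2.2 (hs p hp).2.1) k
  obtain ⟨C, hC⟩ := hH.bddFun
  refine ⟨max C 1, by positivity, fun p hp => ?_⟩
  rw [iteratedDerivWithin_of_isOpen hJ (hs p hp).1, h2 p hp, ← mul_assoc, abs_mul, mul_comm]
  have h3 := Real.rpow_nonneg (hpos p hp).1.le (m - ℓ)
  have h4 := Real.rpow_nonneg (hpos p hp).2.le (-(k : ℝ))
  rw [abs_of_nonneg (mul_nonneg h4 h3)]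
  exact mul_le_mul_of_nonneg_right ((hC _ (hmaps p hp)).trans (le_max_left _ _))
    (mul_nonneg h4 h3)

theorem SB.symbol_bound_snd {c : ℝ → ℝ} (hc : SB univ (fun p => c p.2)) (E₀ : ℝ) (k : ℕ) :
    ∃ C > 0, ∀ E ∈ Ioo 0 E₀,
      |iteratedDerivWithin k (fun E => c (Real.log E)) (Ioo 0 E₀) E| ≤ C * E ^ (-(k : ℝ)) := by
  obtain ⟨C, hC0, hC⟩ := hc.symbol_bound (f := fun _ E => c (Real.log E)) (m := 0)
    (Ω := Ioi 0 ×ˢ Ioo 0 E₀) (J := Ioo 0 E₀) (s := fun _ => Ioi 0) isOpen_univ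
    (isOpen_Ioi.prod isOpen_Ioo) (fun p hp => ⟨hp.1, hp.2.1⟩) (fun _ _ => mem_univ _)
    (fun p _ => by simp) isOpen_Ioo (fun p hp => ⟨hp.2, hp.1, isOpen_Ioi⟩) k 0
  refine ⟨C, hC0, fun E hE => ?_⟩
  simpa using hC (1, E) ⟨by simp, hE⟩

end transfer

/-- Symbol bounds at infinity amount to bounded derivatives in the logarithmic variable. -/
theorem sb_of_symbol {r : ℝ → ℝ} (hr : ContDiffOn ℝ ∞ r (Ioi 0))
    (hb : ∀ k : ℕ, ∃ C > 0, ∀ x : ℝ, 1 ≤ x → |iteratedDeriv k r x| ≤ C * x ^ (-3 - k : ℝ)) :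
    SB (rightOf 0) (fun p => Real.exp (3 * p.1) * r (Real.exp p.1)) := by
  have hU := isOpen_rightOf 0
  have key : ∀ n k : ℕ, BddC n (rightOf 0)
      (fun p => Real.exp ((3 + k) * p.1) * iteratedDeriv k r (Real.exp p.1)) := by
    intro n
    have hbk : ∀ k : ℕ, BddFun (rightOf 0)
        (fun p => Real.exp ((3 + k) * p.1) * iteratedDeriv k r (Real.exp p.1)) := by
      intro k
      obtain ⟨C, hC, h⟩ := hb k
      refine ⟨C, fun p hp => ?_⟩
      have hp' : 0 < p.1 := hp
      have h1 := h (Real.exp p.1) (Real.one_le_exp hp'.le)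
      rw [← Real.exp_mul] at h1
      rw [abs_mul, abs_of_pos (Real.exp_pos _)]
      refine (mul_le_mul_of_nonneg_left h1 (Real.exp_pos _).le).trans (le_of_eq ?_)
      rw [mul_left_comm, ← Real.exp_add]
      ring_nf
      simp
    induction n with
    | zero => exact hbk
    | succ n ih =>
      intro k
      refine .of_hasPD hU (hbk k) (b := fun _ => 0)
        (a := fun p => (3 + k) * (Real.exp ((3 + k) * p.1) * iteratedDeriv k r (Real.exp p.1))
          + Real.exp ((3 + (k + 1 : ℕ)) * p.1) * iteratedDeriv (k + 1) r (Real.exp p.1))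
        (fun p hp => ?_) ((BddC.mul hU (.const hU _) (ih k)).add hU (ih (k + 1))) (.const hU 0)
      have h0 : HasDerivAt (iteratedDeriv k r) (iteratedDeriv (k + 1) r (Real.exp p.1))
          (Real.exp p.1) := by
        rw [iteratedDeriv_succ]
        refine DifferentiableAt.hasDerivAt ?_
        have hmem : Real.exp p.1 ∈ Ioi (0 : ℝ) := Real.exp_pos _
        have h1 := (hr.differentiableOn_iteratedDerivWithin (m := k)
          (by exact_mod_cast WithTop.coe_lt_top _) isOpen_Ioi.uniqueDiffOn).differentiableAt
            (isOpen_Ioi.mem_nhds hmem)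
        exact h1.congr_of_eventuallyEq (Filter.eventually_of_mem (isOpen_Ioi.mem_nhds hmem)
          fun x hx => (iteratedDerivWithin_of_isOpen isOpen_Ioi hx).symm)
      have h1 : HasPD (fun q : ℝ × ℝ => Real.exp q.1) _ _ p :=
        HasPD.comp_real (Real.hasDerivAt_exp _) HasPD.fst
      have h2 : HasPD (fun q : ℝ × ℝ => Real.exp ((3 + k) * q.1)) _ _ p :=
        HasPD.comp_real (Real.hasDerivAt_exp _) ((HasPD.const (3 + k : ℝ)).mul HasPD.fst)
      refine (h2.mul (HasPD.comp_real h0 h1)).cast ?_ (by ring)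
      have : Real.exp ((3 + (k + 1 : ℕ)) * p.1) = Real.exp ((3 + k) * p.1) * Real.exp p.1 := by
        rw [← Real.exp_add]; push_cast; ring_nf
      rw [this]
      ring
  intro n
  have := key n 0
  simpa using this

theorem sb_smoothTransition (a : ℝ) : SB univ (fun p => Real.smoothTransition (p.1 - a)) := by
  have h0 : IsOpen {p : ℝ × ℝ | p.1 < 0} := isOpen_lt continuous_fst continuous_const
  have h1 : SB {p : ℝ × ℝ | p.1 < 0} (fun p => Real.smoothTransition p.1) :=
    (SB.const h0 0).congr h0 fun p hp => (Real.smoothTransition.zero_of_nonpos (le_of_lt hp)).symm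
  have h2 : SB (strip 3) (fun p => Real.smoothTransition p.1) :=
    (sb_fst_strip 3).comp_contDiff (isOpen_strip 3) Real.smoothTransition.contDiff
  have h3 : SB (rightOf 1) (fun p => Real.smoothTransition p.1) :=
    (SB.const (isOpen_rightOf 1) 1).congr (isOpen_rightOf 1) fun p hp =>
      (Real.smoothTransition.one_of_one_le (le_of_lt hp)).symm
  have h4 : SB univ (fun p : ℝ × ℝ => Real.smoothTransition p.1) := by
    refine ((h1.union h2).union h3).mono fun p _ => ?_
    by_cases hp : p.1 < 0
    · exact Or.inl (Or.inl hp)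
    by_cases hp' : 1 < p.1
    · exact Or.inr hp'
    · refine Or.inl (Or.inr ?_)
      show |p.1| < 3
      rw [abs_lt]; constructor <;> linarith
  exact SB.comp_pair (F := fun p => Real.smoothTransition p.1) isOpen_univ h4 (fun _ _ => trivial)
    (f := fun p => p.1 - a) (g := fun p => p.2)
    (fun n => PBddC.sub isOpen_univ (.fst isOpen_univ) (.const isOpen_univ a))
    (fun n => .snd isOpen_univ)

/-- Cutting off a function which decays exponentially makes it small together with its
derivative. -/
theorem exists_cutoff {m : ℝ × ℝ → ℝ} (hm : SB (rightOf 0) m) :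
    ∃ s N, SB univ N ∧ (∀ p, |N p| ≤ 1) ∧ (∀ p, |pdFst N p| ≤ 1) ∧
      ∀ p : ℝ × ℝ, s ≤ p.1 → N p = Real.exp (-p.1) * m p := by
  obtain ⟨C₀, h₀⟩ := hm.bddFun
  obtain ⟨C₁, h₁⟩ := hm.pdFst.bddFun
  obtain ⟨K, hK⟩ := (sb_smoothTransition 0).pdFst.bddFun
  have hC₀ : 0 ≤ C₀ := (abs_nonneg _).trans (h₀ (1, 0) (show (0 : ℝ) < 1 from one_pos))
  have hC₁ : 0 ≤ C₁ := (abs_nonneg _).trans (h₁ (1, 0) (show (0 : ℝ) < 1 from one_pos))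
  have hK0 : 0 ≤ K := (abs_nonneg _).trans (hK 0 trivial)
  obtain ⟨a, ha⟩ : ∃ a, a = (K + 1) * C₀ + C₁ + 1 := ⟨_, rfl⟩
  have ha0 : 0 < a := by rw [ha]; positivity
  have hexp : Real.exp (-a) * a ≤ 1 := by
    rw [Real.exp_neg, inv_mul_le_one₀ (Real.exp_pos _)]
    linarith [Real.add_one_le_exp a]
  have hχ := sb_smoothTransition a
  have hχ' : ∀ p, |pdFst (fun p => Real.smoothTransition (p.1 - a)) p| ≤ K := by
    intro p
    have h1 : HasPD (fun q => Real.smoothTransition (q.1 - a)) _ _ p :=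
      HasPD.comp_pair (F := fun p => Real.smoothTransition (p.1 - 0))
        (f := fun p => p.1 - a + 0) (g := fun p => p.2)
        (((sb_smoothTransition 0).hasPD (p := (p.1 - a + 0, p.2)) trivial))
        ((HasPD.fst.sub (HasPD.const a)).add (HasPD.const 0)) HasPD.snd |>.congr
          (Eventually.of_forall fun q => by simp)
    rw [h1.pdFst_eq]
    simpa using hK (p.1 - a + 0, p.2) trivial
  have hexpm : SB (rightOf 0) (fun p => Real.exp (-p.1)) := by
    have := SB.exp_mul_fst (isOpen_rightOf 0) (-1) (C := 0) fun p hp => by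
      have : 0 < p.1 := hp
      linarith
    simpa using this
  have hw := hexpm.mul (isOpen_rightOf 0) hm
  have hleft : IsOpen {p : ℝ × ℝ | p.1 < a} := isOpen_lt continuous_fst continuous_const
  have hzero : ∀ p : ℝ × ℝ, p.1 < a →
      Real.smoothTransition (p.1 - a) * (Real.exp (-p.1) * m p) = 0 := fun p hp => by
    rw [Real.smoothTransition.zero_of_nonpos (by linarith), zero_mul]
  have hev : ∀ p : ℝ × ℝ, p.1 < a → HasPD
      (fun p => Real.smoothTransition (p.1 - a) * (Real.exp (-p.1) * m p)) 0 0 p := fun p hp =>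
    (HasPD.const 0).congr (Filter.eventually_of_mem (hleft.mem_nhds hp)
      fun q hq => (hzero q hq).symm)
  refine ⟨a + 1, fun p => Real.smoothTransition (p.1 - a) * (Real.exp (-p.1) * m p), ?_,
    fun p => ?_, fun p => ?_, fun p hp => ?_⟩
  · have h1 : SB {p : ℝ × ℝ | p.1 < a}
        (fun p => Real.smoothTransition (p.1 - a) * (Real.exp (-p.1) * m p)) :=
      (SB.const hleft 0).congr hleft fun p hp => (hzero p hp).symm
    refine (h1.union ((hχ.mono (subset_univ _)).mul (isOpen_rightOf 0) hw)).mono fun p _ => ?_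
    by_cases hp : p.1 < a
    · exact Or.inl hp
    · exact Or.inr (show 0 < p.1 by linarith)
  · rcases lt_or_ge p.1 a with hp | hp
    · dsimp only
      rw [hzero p hp]; simp
    · have hp0 : p ∈ rightOf 0 := show 0 < p.1 by linarith
      rw [abs_mul, abs_mul, abs_of_pos (Real.exp_pos _),
        abs_of_nonneg (Real.smoothTransition.nonneg _)]
      have h2 : Real.exp (-p.1) ≤ Real.exp (-a) := Real.exp_le_exp.2 (by linarith)
      calc _ ≤ 1 * (Real.exp (-a) * a) := by
            refine mul_le_mul (Real.smoothTransition.le_one _) (mul_le_mul h2 ?_ (abs_nonneg _)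
              (Real.exp_pos _).le) (by positivity) zero_le_one
            refine (h₀ p hp0).trans ?_
            rw [ha]; nlinarith
        _ ≤ 1 := by linarith
  · rcases lt_or_ge p.1 a with hp | hp
    · rw [(hev p hp).pdFst_eq]; simp
    · have hp0 : p ∈ rightOf 0 := show 0 < p.1 by linarith
      have h2 : Real.exp (-p.1) ≤ Real.exp (-a) := Real.exp_le_exp.2 (by linarith)
      have h3 : HasPD (fun q : ℝ × ℝ => Real.exp (-q.1)) (-Real.exp (-p.1)) 0 p :=
        (HasPD.comp_real (Real.hasDerivAt_exp _) ((HasPD.const 0).sub HasPD.fst)).congr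
          (Eventually.of_forall fun q => by simp) |>.cast (by simp) (by simp)
      rw [((hχ.hasPD (p := p) trivial).mul (h3.mul (hm.hasPD hp0))).pdFst_eq]
      have hd := hχ' p
      have he := h₀ p hp0
      have hf := h₁ p hp0
      have hg : |Real.smoothTransition (p.1 - a)| ≤ 1 := by
        rw [abs_of_nonneg (Real.smoothTransition.nonneg _)]
        exact Real.smoothTransition.le_one _
      generalize pdFst (fun p : ℝ × ℝ => Real.smoothTransition (p.1 - a)) p = A at *
      generalize Real.smoothTransition (p.1 - a) = B at *
      have h4 : A * (Real.exp (-p.1) * m p) + B * (-Real.exp (-p.1) * m p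
          + Real.exp (-p.1) * pdFst m p) =
          Real.exp (-p.1) * (A * m p + B * (pdFst m p - m p)) := by ring
      rw [h4, abs_mul, abs_of_pos (Real.exp_pos _)]
      have h5 : |A * m p + B * (pdFst m p - m p)| ≤ a := by
        calc _ ≤ |A| * |m p| + |B| * (|pdFst m p| + |m p|) := by
              refine (abs_add_le _ _).trans ?_
              rw [abs_mul, abs_mul]
              gcongr
              exact abs_sub _ _
          _ ≤ K * C₀ + 1 * (C₁ + C₀) := by gcongr
          _ ≤ a := by rw [ha]; linarith
      exact (mul_le_mul h2 h5 (abs_nonneg _) (Real.exp_pos _).le).trans hexp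
  · dsimp only
    rw [Real.smoothTransition.one_of_one_le (by linarith), one_mul]

/-- The logarithm of the rescaled potential, modified away from infinity. -/
theorem exists_log_potential {V : ℝ → ℝ} {μp h : ℝ}
    (hV : ∀ n : ℕ, ContDiff ℝ n V)
    (hVp : ∀ k : ℕ, ∃ C > 0, ∀ x : ℝ, 1 ≤ x →
      |iteratedDeriv k (fun t => V t - μp ^ 2 / t ^ 2) x| ≤ C * x ^ (-3 - k : ℝ))
    (hnorm : μp ^ 2 + h ^ 2 / 4 = 2) :
    ∃ γ s, SB univ γ ∧ (∀ p, |pdFst γ p| ≤ 1 / 2) ∧ ∀ p : ℝ × ℝ, s ≤ p.1 - p.2 / 2 →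
      Real.exp (2 * γ p) =
        Real.exp (2 * (p.1 - p.2 / 2)) * V0 V h (Real.exp (p.1 - p.2 / 2)) := by
  have hU := isOpen_rightOf 0
  have hr : ContDiffOn ℝ ∞ (fun t => V t - μp ^ 2 / t ^ 2) (Ioi 0) := by
    refine (contDiff_infty.2 hV).contDiffOn.sub (contDiffOn_const.div (contDiffOn_id.pow 2) ?_)
    intro x hx
    have : (0 : ℝ) < x := hx
    exact pow_ne_zero 2 this.ne'
  have hm0 := sb_of_symbol hr hVp
  have hexp : ∀ k : ℝ, 0 ≤ k → SB (rightOf 0) (fun p => Real.exp (-k * p.1)) := fun k hk =>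
    SB.exp_mul_fst hU (-k) (C := 0) fun p hp => by
      have : 0 < p.1 := hp
      nlinarith
  have hinv : SB (rightOf 0) (fun p => (1 + Real.exp (-2 * p.1))⁻¹) :=
    ((SB.const hU 1).add hU (hexp 2 zero_le_two)).inv hU one_pos fun p _ => by
      linarith [Real.exp_pos (-2 * p.1)]
  have hm := hm0.sub hU (((hexp 1 zero_le_one).mul hU hinv).const_mul hU (h ^ 2 / 4))
  obtain ⟨s, N, hN, hN1, hN2, hNeq⟩ := exists_cutoff hm
  have hpos : ∀ p, 1 ≤ 2 + N p := fun p => by linarith [(abs_le.1 (hN1 p)).1]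
  have hG : SB univ (fun p => 1 / 2 * Real.log (2 + N p)) :=
    (((SB.const isOpen_univ 2).add isOpen_univ hN).log isOpen_univ one_pos
      fun p _ => hpos p).const_mul isOpen_univ _
  have hG' : ∀ p, |pdFst (fun p => 1 / 2 * Real.log (2 + N p)) p| ≤ 1 / 2 := by
    intro p
    have h1 := (HasPD.const (p := p) (1 / 2)).mul (HasPD.comp_real
      (Real.hasDerivAt_log (by linarith [hpos p] : 2 + N p ≠ 0))
        ((HasPD.const 2).add (hN.hasPD (p := p) trivial)))
    rw [h1.pdFst_eq]
    have h2 : (2 + N p)⁻¹ ≤ 1 := inv_le_one_of_one_le₀ (hpos p)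
    have h3 : 0 ≤ (2 + N p)⁻¹ := inv_nonneg.2 (by linarith [hpos p])
    rw [zero_mul, zero_add, zero_add, abs_mul, abs_mul, abs_of_nonneg h3,
      abs_of_pos (by norm_num : (0 : ℝ) < 1 / 2)]
    nlinarith [mul_le_mul h2 (hN2 p) (abs_nonneg _) zero_le_one]
  have hlin : ∀ p, HasPD (fun q : ℝ × ℝ => q.1 - 1 / 2 * q.2) 1 (-(1 / 2)) p := fun p =>
    (HasPD.fst.sub ((HasPD.const (1 / 2)).mul HasPD.snd)).cast (by ring) (by ring)
  have hlin' : ∀ n, PBddC n univ (fun q : ℝ × ℝ => q.1 - 1 / 2 * q.2) := by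
    rintro (_ | n)
    · trivial
    · exact .of_hasPD isOpen_univ (fun p _ => hlin p) (.const isOpen_univ _) (.const isOpen_univ _)
  refine ⟨fun p => 1 / 2 * Real.log (2 + N (p.1 - 1 / 2 * p.2, p.2)), s,
    SB.comp_pair isOpen_univ hG (fun _ _ => trivial) hlin' (fun n => .snd isOpen_univ),
    fun p => ?_, fun p hp => ?_⟩
  · have h1 := HasPD.comp_pair (hG.hasPD (p := (p.1 - 1 / 2 * p.2, p.2)) trivial) (hlin p) HasPD.snd
    rw [h1.pdFst_eq]
    simpa using hG' (p.1 - 1 / 2 * p.2, p.2)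
  · dsimp only
    rw [show p.1 - 1 / 2 * p.2 = p.1 - p.2 / 2 by ring, ← mul_assoc, mul_one_div_cancel two_ne_zero,
      one_mul, Real.exp_log (by linarith [hpos (p.1 - p.2 / 2, p.2)]), hNeq _ hp]
    dsimp only
    generalize p.1 - p.2 / 2 = u
    have e1 : Real.exp (3 * u) = Real.exp u ^ 3 := by rw [← Real.exp_nat_mul]; norm_num
    have e2 : Real.exp (2 * u) = Real.exp u ^ 2 := by rw [← Real.exp_nat_mul]; norm_num
    have e3 : Real.exp (-2 * u) = (Real.exp u ^ 2)⁻¹ := by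
      rw [← e2, ← Real.exp_neg]; ring_nf
    have e4 : Real.exp (-1 * u) = (Real.exp u)⁻¹ := by rw [← Real.exp_neg]; ring_nf
    rw [e1, e2, e3, e4, Real.exp_neg]
    have hx := Real.exp_pos u
    generalize Real.exp u = x at *
    unfold V0
    have h5 : (1 + (x ^ 2)⁻¹)⁻¹ = x ^ 2 * (1 + x ^ 2)⁻¹ := by field_simp; ring
    rw [h5]
    have h6 : h ^ 2 / 4 = 2 - μp ^ 2 := by linarith
    rw [h6]
    field_simp
    ring

/-- The normal form change of variables in the logarithmic variables `log y` and `log E`. -/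
theorem exists_log_normalForm {V : ℝ → ℝ} {μp h : ℝ}
    (hV : ∀ n : ℕ, ContDiff ℝ n V)
    (hVp : ∀ k : ℕ, ∃ C > 0, ∀ x : ℝ, 1 ≤ x →
      |iteratedDeriv k (fun t => V t - μp ^ 2 / t ^ 2) x| ≤ C * x ^ (-3 - k : ℝ))
    (hnorm : μp ^ 2 + h ^ 2 / 4 = 2) :
    ∃ (v w : ℝ × ℝ → ℝ) (c : ℝ → ℝ) (s : ℝ), IsBddDiffeo v ∧ IsBddDiffeo w ∧
      (∀ x t, w (v (x, t), t) = x) ∧ (∀ x t, v (w (x, t), t) = x) ∧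
      SB univ (fun p => c p.2) ∧
      (∀ a, SB (rightOf a) (fun p => Real.exp p.1 * (Real.exp (v p) - Real.exp p.1 - c p.2))) ∧
      (∀ a, SB (rightOf a) (fun p => Real.exp p.1 * (Real.exp (w p) - Real.exp p.1 + c p.2))) ∧
      (∀ p : ℝ × ℝ, s ≤ p.1 - p.2 / 2 →
        (1 - Real.exp (-p.2) * V0 V h (Real.exp (p.1 - p.2 / 2))) * Real.exp (2 * p.1) =
          (1 - Real.exp (-2 * v p)) * Real.exp (2 * v p) * pdFst v p ^ 2) ∧
      ∀ p : ℝ × ℝ, s ≤ p.1 - p.2 / 2 → V0 V h (Real.exp (p.1 - p.2 / 2)) = Real.exp p.2 →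
        v p = 0 := by
  obtain ⟨γ, s, hγ, hγ', hγV⟩ := exists_log_potential hV hVp hnorm
  have h0 : SB univ (fun _ => 0) := SB.const isOpen_univ 0
  obtain ⟨S₁, h₁⟩ := exists_isLangerVar hγ hγ'
  obtain ⟨S₂, h₂⟩ := exists_isLangerVar h0 fun p => by rw [(HasPD.const 0).pdFst_eq]; norm_num
  obtain ⟨v, hv, hSv⟩ := h₁.exists_transition hγ h0 h₂
  obtain ⟨w, hw, hSw⟩ := h₂.exists_transition h0 hγ h₁
  obtain ⟨c, hc, hcv, hcw⟩ := h₁.transition_expansion hγ h0 h₂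
  refine ⟨v, w, c, s, hv, hw, fun x t => h₁.injective hγ (t := t) ?_,
    fun x t => h₂.injective h0 (t := t) ?_, hc, hcv v hv hSv, hcw w hw hSw, fun p hp => ?_,
    fun p hp hE => ?_⟩
  · rw [hSw (v (x, t), t), hSv (x, t)]
  · rw [hSv (w (x, t), t), hSw (x, t)]
  · have h3 := h₁.transition_ode h₂ hv hSv p
    rw [sub_zero] at h3
    rw [← h3, show -2 * (p.1 - γ p) = -2 * p.1 + 2 * γ p by ring, Real.exp_add, hγV p hp,
      ← mul_assoc, ← Real.exp_add]
    ring_nf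
  · have h3 : p.1 = γ p := by
      have h4 := hγV p hp
      rw [hE, ← Real.exp_add] at h4
      linarith [Real.exp_injective h4]
    refine h₂.injective h0 (t := p.2) ?_
    rw [hSv p, h₁.eq_zero p h3, h₂.eq_zero _ rfl]

section expConj

variable {v w : ℝ × ℝ → ℝ}

/-- The change of variables `v` expressed in the exponentials of its variables. -/
noncomputable def expConj (v : ℝ × ℝ → ℝ) (y E : ℝ) : ℝ := Real.exp (v (Real.log y, Real.log E))

theorem expConj_pos (y E : ℝ) : 0 < expConj v y E := Real.exp_pos _

theorem expConj_expConj (hwv : ∀ x t, w (v (x, t), t) = x) {y : ℝ} (hy : 0 < y) (E : ℝ) :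
    expConj w (expConj v y E) E = y := by
  rw [expConj, expConj, Real.log_exp, hwv, Real.exp_log hy]

theorem IsBddDiffeo.hasDerivAt_expConj (hv : IsBddDiffeo v) {y : ℝ} (hy : 0 < y) (E : ℝ) :
    HasDerivAt (fun y => expConj v y E)
      (expConj v y E * (pdFst v (Real.log y, Real.log E) * y⁻¹)) y :=
  (HasDerivAt.comp (h₂ := fun x => v (x, Real.log E)) y
    (hv.hasPD (Real.log y, Real.log E)).hasDerivAt_fst (Real.hasDerivAt_log hy.ne')).exp

theorem IsBddDiffeo.contDiffOn_expConj (hv : IsBddDiffeo v) (n : ℕ) :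
    ContDiffOn ℝ n (fun p : ℝ × ℝ => expConj v p.1 p.2) (Ioi 0 ×ˢ Ioi 0) := by
  refine ((hv.contDiff n).comp_contDiffOn (f := fun p : ℝ × ℝ => (Real.log p.1, Real.log p.2))
    (ContDiffOn.prodMk (contDiffOn_fst.log ?_) (contDiffOn_snd.log ?_))).exp
  · exact fun p hp => ne_of_gt hp.1
  · exact fun p hp => ne_of_gt hp.2

theorem IsBddDiffeo.expConj_lt (hv : IsBddDiffeo v) {y y' : ℝ} (hy : 0 < y) (hyy' : y < y')
    (E : ℝ) : expConj v y E < expConj v y' E :=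
  Real.exp_lt_exp.2 (hv.strictMono _ (Real.log_lt_log hy hyy'))

theorem IsBddDiffeo.image_expConj_Ioi (hv : IsBddDiffeo v) (hw : IsBddDiffeo w)
    (hwv : ∀ x t, w (v (x, t), t) = x)
    (hvw : ∀ x t, v (w (x, t), t) = x) {ε : ℝ} (hε : 0 < ε) (E : ℝ) :
    (fun y => expConj v y E) '' Ioi ε = Ioi (expConj v ε E) := by
  ext z
  constructor
  · rintro ⟨y, hy, rfl⟩
    exact hv.expConj_lt hε hy E
  · intro hz
    have hz0 : 0 < z := (expConj_pos ε E).trans hz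
    refine ⟨expConj w z E, ?_, expConj_expConj hvw hz0 E⟩
    have := hw.expConj_lt (expConj_pos ε E) hz E
    rwa [expConj_expConj hwv hε E] at this

theorem IsBddDiffeo.expConj_bound (hv : IsBddDiffeo v) {a : ℝ} {Ω : Set (ℝ × ℝ)} (hΩ : IsOpen Ω)
    (hpos : ∀ p ∈ Ω, 0 < p.1 ∧ 0 < p.2) (ha : ∀ p ∈ Ω, a < Real.log p.1) {J : Set ℝ}
    (hJ : IsOpen J) {s : ℝ → Set ℝ} (hs : ∀ p ∈ Ω, p.2 ∈ J ∧ p.1 ∈ s p.2 ∧ IsOpen (s p.2))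
    (k ℓ : ℕ) :
    ∃ C > 0, ∀ p ∈ Ω, |iteratedDerivWithin k
      (fun E => iteratedDerivWithin ℓ (fun y => expConj v y E) (s E) p.1) J p.2| ≤
        C * (p.2 ^ (-(k : ℝ)) * p.1 ^ (1 - ℓ : ℝ)) := by
  refine ((hv.sb a).exp (isOpen_rightOf a)).symbol_bound (isOpen_rightOf a) hΩ hpos ha
    (fun p hp => ?_) hJ hs k ℓ
  rw [Real.exp_sub, Real.exp_log (hpos p hp).1, Real.rpow_one,
    mul_div_cancel₀ _ (hpos p hp).1.ne', expConj]

theorem SB.remainder_bound {F : ℝ × ℝ → ℝ} (hF : SB (rightOf (-1)) F) {f : ℝ → ℝ → ℝ}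
    (hf : ∀ y E, 0 < y → f y E = F (Real.log y, Real.log E)) (E₀ : ℝ) (k j : ℕ) :
    ∃ C > 0, ∀ E ∈ Ioo 0 E₀, ∀ y ∈ Ioi (1 : ℝ), |iteratedDerivWithin k
      (fun E => iteratedDerivWithin j (fun y => f y E) (Ioi 1) y) (Ioo 0 E₀) E| ≤
        C * y ^ (-(j : ℝ)) * E ^ (-(k : ℝ)) := by
  have hpos : ∀ p ∈ Ioi (1 : ℝ) ×ˢ Ioo 0 E₀, 0 < p.1 ∧ 0 < p.2 := fun p hp =>
    ⟨one_pos.trans hp.1, hp.2.1⟩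
  obtain ⟨C, hC0, hC⟩ := hF.symbol_bound (f := f) (m := 0) (Ω := Ioi 1 ×ˢ Ioo 0 E₀)
    (J := Ioo 0 E₀) (s := fun _ => Ioi 1) (isOpen_rightOf _) (isOpen_Ioi.prod isOpen_Ioo) hpos
    (fun p hp => show -1 < Real.log p.1 by linarith [Real.log_pos hp.1])
    (fun p hp => by rw [hf _ _ (hpos p hp).1, Real.rpow_zero, one_mul]) isOpen_Ioo
    (fun p hp => ⟨hp.2, hp.1, isOpen_Ioi⟩) k j
  refine ⟨C, hC0, fun E hE y hy => (hC (y, E) ⟨hy, hE⟩).trans (le_of_eq ?_)⟩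
  rw [zero_sub]
  ring

end expConj

/-- for fixed `ε > 0` there exist `E₀ > 0` small and a smooth normal-form
change of variables `ξ(y,E)` on `(ε,∞)×(0,E₀)` with `ξ(√E x₁(E),E) = 1`,
`1 − E⁻¹V₀(E^{-1/2}y) = (∂_yξ)²(1 − ξ⁻²)`, `ξ(y,E) = y + ξ₀(E) + y⁻¹ρ₀(y,E)`,
derivative bounds `|∂_E^k∂_y^ℓ ξ| ≤ C E^{−k}y^{1−ℓ}`, bounds on `ξ₀, ρ₀`, and for each
`E` the map `y ↦ ξ(y,E)` is a global diffeomorphism whose inverse satisfies the analogous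
expansion and bounds relative to `ξ`. -/
theorem normal_form_change_of_variables
    (V : ℝ → ℝ) (μp h ε Ec : ℝ)
    (hVsmooth : ∀ n : ℕ, ContDiff ℝ n V)
    (hVpos : ∀ x, 0 < V x)
    (hμp : μp ≠ 0)
    (hVp : ∀ k : ℕ, ∃ C > 0, ∀ x : ℝ, 1 ≤ x →
      |iteratedDeriv k (fun t => V t - μp ^ 2 / t ^ 2) x| ≤ C * x ^ (-3 - k : ℝ))
    (hh : h ∈ Set.Ioo (0 : ℝ) 1)
    (hnorm : μp ^ 2 + h ^ 2 / 4 = 2)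
    (hε : 0 < ε) (hEc : 0 < Ec)
    (x₁ : ℝ → ℝ)
    (hx₁ : ∀ E ∈ Set.Ioo 0 Ec,
      0 < x₁ E ∧ V0 V h (x₁ E) = E ∧ ∀ x, 0 < x → V0 V h x = E → x = x₁ E) :
    ∃ E₀, 0 < E₀ ∧ E₀ ≤ Ec ∧ ∃ ξ : ℝ → ℝ → ℝ,
      -- ξ is smooth on (ε,∞)×(0,E₀)
      (∀ n : ℕ, ContDiffOn ℝ n (fun p : ℝ × ℝ => ξ p.1 p.2)
        (Set.Ioi ε ×ˢ Set.Ioo 0 E₀)) ∧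
      -- normalization at the turning point
      (∀ E ∈ Set.Ioo 0 E₀, ξ (Real.sqrt E * x₁ E) E = 1) ∧
      -- the defining identity 1 − E⁻¹V₀(E^{-1/2}y) = (∂_yξ)²(1 − ξ⁻²)
      (∀ E ∈ Set.Ioo 0 E₀, ∀ y ∈ Set.Ioi ε,
        1 - E⁻¹ * V0 V h (E ^ (-(1 : ℝ) / 2) * y)
          = (deriv (fun y' => ξ y' E) y) ^ 2 * (1 - ((ξ y E) ^ 2)⁻¹)) ∧
      -- expansion ξ(y,E) = y + ξ₀(E) + y⁻¹ρ₀(y,E) with bounds on (1,∞)×(0,E₀)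
      (∃ ξ₀ : ℝ → ℝ, ∃ ρ₀ : ℝ → ℝ → ℝ,
        (∀ E ∈ Set.Ioo 0 E₀, ∀ y ∈ Set.Ioi (1 : ℝ), ξ y E = y + ξ₀ E + y⁻¹ * ρ₀ y E) ∧
        (∀ k : ℕ, ∃ C > 0, ∀ E ∈ Set.Ioo 0 E₀,
          |iteratedDerivWithin k ξ₀ (Set.Ioo 0 E₀) E| ≤ C * E ^ (-(k : ℝ))) ∧
        (∀ k j : ℕ, ∃ C > 0, ∀ E ∈ Set.Ioo 0 E₀, ∀ y ∈ Set.Ioi (1 : ℝ),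
          |iteratedDerivWithin k
              (fun E' => iteratedDerivWithin j (fun y' => ρ₀ y' E') (Set.Ioi 1) y)
              (Set.Ioo 0 E₀) E|
            ≤ C * y ^ (-(j : ℝ)) * E ^ (-(k : ℝ)))) ∧
      -- derivative bounds |∂_E^k∂_y^ℓ ξ| ≤ C E^{−k} y^{1−ℓ}
      (∀ k ℓ : ℕ, ∃ C > 0, ∀ E ∈ Set.Ioo 0 E₀, ∀ y ∈ Set.Ioi ε,
        |iteratedDerivWithin k
            (fun E' => iteratedDerivWithin ℓ (fun y' => ξ y' E') (Set.Ioi ε) y)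
            (Set.Ioo 0 E₀) E|
          ≤ C * E ^ (-(k : ℝ)) * y ^ ((1 : ℝ) - ℓ)) ∧
      -- for fixed E, y ↦ ξ(y,E) is a global diffeomorphism with inverse yI(·,E)
      (∃ yI : ℝ → ℝ → ℝ,
        (∀ E ∈ Set.Ioo 0 E₀,
          StrictMonoOn (fun y' => ξ y' E) (Set.Ioi ε) ∧
          (∀ y ∈ Set.Ioi ε, yI (ξ y E) E = y) ∧
          (∀ z ∈ (fun y' => ξ y' E) '' Set.Ioi ε, ξ (yI z E) E = z) ∧
          (∀ n : ℕ, ContDiffOn ℝ n (fun z => yI z E) ((fun y' => ξ y' E) '' Set.Ioi ε))) ∧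
        -- expansion of the inverse: y(ξ,E) = ξ + y₀(E) + ξ⁻¹ρ̃₀(ξ,E) with bounds
        (∃ y₀ : ℝ → ℝ, ∃ ρ₀' : ℝ → ℝ → ℝ,
          (∀ E ∈ Set.Ioo 0 E₀, ∀ z ∈ ((fun y' => ξ y' E) '' Set.Ioi ε) ∩ Set.Ioi (1 : ℝ),
            yI z E = z + y₀ E + z⁻¹ * ρ₀' z E) ∧
          (∀ k : ℕ, ∃ C > 0, ∀ E ∈ Set.Ioo 0 E₀,
            |iteratedDerivWithin k y₀ (Set.Ioo 0 E₀) E| ≤ C * E ^ (-(k : ℝ))) ∧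
          (∀ k j : ℕ, ∃ C > 0, ∀ E ∈ Set.Ioo 0 E₀,
            ∀ z ∈ ((fun y' => ξ y' E) '' Set.Ioi ε) ∩ Set.Ioi (1 : ℝ),
            |iteratedDerivWithin k
                (fun E' => iteratedDerivWithin j (fun z' => ρ₀' z' E') (Set.Ioi 1) z)
                (Set.Ioo 0 E₀) E|
              ≤ C * z ^ (-(j : ℝ)) * E ^ (-(k : ℝ)))) ∧
        -- derivative bounds |∂_E^k∂_ξ^ℓ y| ≤ C E^{−k} ξ^{1−ℓ}
        (∀ k ℓ : ℕ, ∃ C > 0, ∀ E ∈ Set.Ioo 0 E₀,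
          ∀ z ∈ (fun y' => ξ y' E) '' Set.Ioi ε,
          |iteratedDerivWithin k
              (fun E' => iteratedDerivWithin ℓ (fun z' => yI z' E')
                ((fun y' => ξ y' E') '' Set.Ioi ε) z)
              (Set.Ioo 0 E₀) E|
            ≤ C * E ^ (-(k : ℝ)) * z ^ ((1 : ℝ) - ℓ))) := by
  obtain ⟨v, w, c, s, hv, hw, hwv, hvw, hc, hcv, hcw, hode, hturn⟩ :=
    exists_log_normalForm hVsmooth hVp hnorm
  have hV0 : ∀ x, V x ≤ V0 V h x := fun x => by
    unfold V0
    have : 0 ≤ h ^ 2 / 4 * (1 + x ^ 2)⁻¹ := by positivity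
    linarith
  obtain ⟨δ, hδ, hδV⟩ : ∃ δ > 0, ∀ x ∈ Icc 0 (Real.exp s), δ ≤ V x := by
    obtain ⟨x, -, hx⟩ := isCompact_Icc.exists_isMinOn (nonempty_Icc.2 (Real.exp_pos s).le)
      (hVsmooth 0).continuous.continuousOn
    exact ⟨V x, hVpos x, hx⟩
  have himage := fun E => hv.image_expConj_Ioi hw hwv hvw hε E
  refine ⟨min Ec (min δ (Real.exp (2 * (Real.log ε - s)))),
    lt_min hEc (lt_min hδ (Real.exp_pos _)), min_le_left _ _, expConj v, ?_⟩
  have hE₀c : min Ec (min δ (Real.exp (2 * (Real.log ε - s)))) ≤ Ec := min_le_left _ _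
  have hE₀δ : min Ec (min δ (Real.exp (2 * (Real.log ε - s)))) ≤ δ :=
    (min_le_right _ _).trans (min_le_left _ _)
  have hE₀s : min Ec (min δ (Real.exp (2 * (Real.log ε - s)))) ≤
      Real.exp (2 * (Real.log ε - s)) := (min_le_right _ _).trans (min_le_right _ _)
  generalize min Ec (min δ (Real.exp (2 * (Real.log ε - s)))) = E₀ at *
  have hlow : ∀ E ∈ Ioo 0 E₀, ∀ y ∈ Ioi ε, s ≤ Real.log y - Real.log E / 2 := by
    intro E hE y hy
    have h1 := Real.log_lt_log hε hy
    have h2 := (Real.log_lt_iff_lt_exp hE.1).2 (hE.2.trans_le hE₀s)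
    linarith
  have hΩpos : ∀ p ∈ Ioi ε ×ˢ Ioo 0 E₀, 0 < p.1 ∧ 0 < p.2 := fun p hp =>
    ⟨hε.trans hp.1, hp.2.1⟩
  refine ⟨fun n => (hv.contDiffOn_expConj n).mono fun p hp => hΩpos p hp, fun E hE => ?_,
    fun E hE y hy => ?_, ⟨fun E => c (Real.log E),
      fun y E => y * (expConj v y E - y - c (Real.log E)), fun E hE y hy => ?_,
      hc.symbol_bound_snd E₀, (hcv (-1)).remainder_bound (fun y E hy => ?_) E₀⟩, fun k ℓ => ?_,
    expConj w, fun E hE => ⟨fun y hy y' _ hyy' => hv.expConj_lt (hε.trans hy) hyy' E,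
      fun y hy => expConj_expConj hwv (hε.trans hy) E, fun z hz => ?_, fun n => ?_⟩,
    ⟨fun E => -c (Real.log E), fun z E => z * (expConj w z E - z + c (Real.log E)),
      fun E hE z hz => ?_, (hc.neg isOpen_univ).symbol_bound_snd (c := fun t => -c t) E₀,
      fun k j => ?_⟩, fun k ℓ => ?_⟩
  · obtain ⟨h1, h2, -⟩ := hx₁ E ⟨hE.1, hE.2.trans_le hE₀c⟩
    have h3 : Real.exp s < x₁ E := by
      by_contra! h4
      linarith [hδV _ ⟨h1.le, h4⟩, hV0 (x₁ E), hE.2]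
    have h5 : Real.log (√E * x₁ E) - Real.log E / 2 = Real.log (x₁ E) := by
      rw [Real.log_mul (Real.sqrt_pos.2 hE.1).ne' h1.ne', Real.log_sqrt hE.1.le]
      ring
    rw [expConj, hturn, Real.exp_zero]
    · dsimp only
      rw [h5]
      exact (Real.le_log_iff_exp_le h1).2 h3.le
    · dsimp only
      rw [h5, Real.exp_log h1, Real.exp_log hE.1, h2]
  · have hy0 : 0 < y := hε.trans hy
    have h1 := hode (Real.log y, Real.log E) (hlow E hE y hy)
    rw [(hv.hasDerivAt_expConj hy0 E).deriv]
    have h2 : E ^ (-(1 : ℝ) / 2) * y = Real.exp (Real.log y - Real.log E / 2) := by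
      rw [Real.rpow_def_of_pos hE.1, sub_eq_add_neg, Real.exp_add, Real.exp_log hy0]
      ring_nf
    rw [h2]
    dsimp only at h1
    rw [Real.exp_neg, Real.exp_log hE.1] at h1
    have h3 : ∀ x : ℝ, Real.exp (2 * x) = Real.exp x ^ 2 := fun x => by
      rw [← Real.exp_nat_mul]; norm_num
    rw [neg_mul, Real.exp_neg, h3, h3, Real.exp_log hy0] at h1
    refine mul_right_cancel₀ (pow_ne_zero 2 hy0.ne') (h1.trans ?_)
    rw [expConj]
    field_simp
  · have hy0 : 0 < y := one_pos.trans hy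
    field_simp
    ring
  · simp only [expConj]
    rw [Real.exp_log hy]
  · have ha : ∀ p ∈ Ioi ε ×ˢ Ioo 0 E₀, Real.log ε < Real.log p.1 := fun p hp =>
      Real.log_lt_log hε hp.1
    obtain ⟨C, hC0, hC⟩ := hv.expConj_bound (isOpen_Ioi.prod isOpen_Ioo) hΩpos ha isOpen_Ioo
      (s := fun _ => Ioi ε) (fun p hp => ⟨hp.2, hp.1, isOpen_Ioi⟩) k ℓ
    refine ⟨C, hC0, fun E hE y hy => (hC (y, E) ⟨hy, hE⟩).trans (le_of_eq ?_)⟩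
    ring
  · rw [himage] at hz
    exact expConj_expConj hvw ((expConj_pos ε E).trans hz) E
  · rw [himage]
    exact (hw.contDiffOn_expConj n).comp (f := fun z => (z, E))
      (contDiffOn_id.prodMk contDiffOn_const) fun z hz => ⟨(expConj_pos ε E).trans hz, hE.1⟩
  · have hz0 : 0 < z := one_pos.trans hz.2
    field_simp
    ring
  · obtain ⟨C, hC0, hC⟩ := (hcw (-1)).remainder_bound
      (f := fun z E => z * (expConj w z E - z + c (Real.log E)))
      (fun z E hz => by simp only [expConj]; rw [Real.exp_log hz]) E₀ k j
    exact ⟨C, hC0, fun E hE z hz => hC E hE z hz.2⟩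
  · simp only [himage]
    obtain ⟨b, hb⟩ := hv.exists_maps (Real.log ε - 1)
    have hpos : ∀ p ∈ {p : ℝ × ℝ | p.2 ∈ Ioo 0 E₀ ∧ expConj v ε p.2 < p.1},
        0 < p.1 ∧ 0 < p.2 := fun p hp => ⟨(expConj_pos ε p.2).trans hp.2, hp.1.1⟩
    have ha : ∀ p ∈ {p : ℝ × ℝ | p.2 ∈ Ioo 0 E₀ ∧ expConj v ε p.2 < p.1},
        b < Real.log p.1 := fun p hp => by
      have h1 : b < v (Real.log ε, Real.log p.2) :=
        hb (Real.log ε, Real.log p.2) (show Real.log ε - 1 < Real.log ε by linarith)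
      exact h1.trans ((Real.lt_log_iff_exp_lt (hpos p hp).1).2 hp.2)
    have hopen : IsOpen {p : ℝ × ℝ | p.2 ∈ Ioo 0 E₀ ∧ expConj v ε p.2 < p.1} := by
      have h1 : ContinuousOn (fun p : ℝ × ℝ => p.1 - expConj v ε p.2) (univ ×ˢ Ioo 0 E₀) := by
        refine continuousOn_fst.sub ((hv.contDiffOn_expConj 0).continuousOn.comp
          (f := fun p : ℝ × ℝ => (ε, p.2)) (by fun_prop) fun p hp => ⟨hε, hp.2.1⟩)
      convert h1.isOpen_inter_preimage (isOpen_univ.prod isOpen_Ioo) (isOpen_Ioi (a := 0)) using 1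
      ext p
      simp
    obtain ⟨C, hC0, hC⟩ := hw.expConj_bound hopen hpos ha isOpen_Ioo
      (s := fun E => Ioi (expConj v ε E)) (fun p hp => ⟨hp.1, hp.2, isOpen_Ioi⟩) k ℓ
    refine ⟨C, hC0, fun E hE z hz => (hC (z, E) ⟨hE, hz⟩).trans (le_of_eq ?_)⟩
    ring
end

section
/- On a region where ζ < 0, one has the exact identity q^{-1/4} d²(q^{1/4})/dζ² = 5/(16ζ²) + q^{-1} [ (1/4) V₀''/Q₀ − (5/16) (V₀'/Q₀)² ], and consequently Ṽ := (1/4)q^{-1}⟨x⟩^{-2} − q^{-1/4} d²(q^{1/4})/dζ² = −5/(16ζ²) + q^{-1} [ (1/4)⟨x⟩^{-2} − (1/4) V₀''/Q₀ + (5/16) (V₀'/Q₀)² ], where V₀', V₀'' are derivatives with respect to x and d/dζ denotes differentiation with respect to ζ. -/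
open Filter Topology

/-- A function with nonzero strict derivative at `x` pushes `𝓝 x` to `𝓝 (f x)`, so any left inverse
near `x` is differentiable at `f x`. -/
theorem HasStrictDerivAt.hasDerivAt_of_eventually_leftInverse {f g : ℝ → ℝ} {f' x : ℝ}
    (hf : HasStrictDerivAt f f' x) (hf' : f' ≠ 0) (hg : ∀ᶠ y in 𝓝 x, g (f y) = y) :
    HasDerivAt g f'⁻¹ (f x) := by
  have hmap := hf.map_nhds_eq hf'
  have hgx : g (f x) = x := hg.self_of_nhds
  have hcont : ContinuousAt g (f x) := by
    rw [ContinuousAt, ← hmap, tendsto_map'_iff, hgx]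
    exact tendsto_id.congr' (hg.mono fun y hy => hy.symm)
  refine HasDerivAt.of_local_left_inverse hcont (hgx.symm ▸ hf.hasDerivAt) hf' ?_
  rw [← hmap, eventually_map]
  exact hg.mono fun y hy => by rw [hy]

/-- If `dζ/dx = √q` with `q = -Q / ζ`, then `q ^ (1/4)` has logarithmic derivative
`(Q' / Q - √q / ζ) / 4`. -/
theorem hasDerivAt_rpow_quarter_neg_div {Q ζ : ℝ → ℝ} {Q' x : ℝ} (hQ : HasDerivAt Q Q' x)
    (hζ : HasDerivAt ζ (√(-Q x / ζ x)) x) (hQx : 0 < Q x) (hζx : ζ x < 0) :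
    HasDerivAt (fun y => (-Q y / ζ y) ^ ((1 : ℝ) / 4))
      ((-Q x / ζ x) ^ ((1 : ℝ) / 4) / 4 *
        (Q' / Q x - ((-Q x / ζ x) ^ ((1 : ℝ) / 4)) ^ 2 / ζ x)) x := by
  have hq : 0 < -Q x / ζ x := div_pos_of_neg_of_neg (neg_lt_zero.2 hQx) hζx
  have hsqrt : √(-Q x / ζ x) = ((-Q x / ζ x) ^ ((1 : ℝ) / 4)) ^ 2 := by
    rw [Real.sqrt_eq_rpow, ← Real.rpow_mul_natCast hq.le]
    norm_num
  rw [hsqrt] at hζ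
  convert (hQ.fun_neg.fun_div hζ hζx.ne).rpow_const (p := (1 : ℝ) / 4) (Or.inl hq.ne') using 1
  rw [Real.rpow_sub_one hq.ne']
  have := hQx.ne'
  have := hζx.ne
  field_simp
  ring

/-- with `q = −Q₀/ζ`, `Q₀ = V₀ − E > 0`, `ζ < 0`, `dζ/dx = √q`, one has the
exact identities
`q^{-1/4} d²(q^{1/4})/dζ² = 5/(16ζ²) + q⁻¹ [ (1/4)V₀''/Q₀ − (5/16)(V₀'/Q₀)² ]`
and consequently
`Ṽ = (1/4)q⁻¹⟨x⟩⁻² − q^{-1/4} d²(q^{1/4})/dζ²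
   = −5/(16ζ²) + q⁻¹ [ (1/4)⟨x⟩⁻² − (1/4)V₀''/Q₀ + (5/16)(V₀'/Q₀)² ]`,
where functions of `x` are regarded as functions of `ζ` via the inverse `xinv` of `ζ`. -/
theorem q_second_derivative_identity
    (J : Set ℝ) (hJopen : IsOpen J) (hJconv : Convex ℝ J)
    (V₀ ζ : ℝ → ℝ) (E : ℝ) (hE : 0 < E)
    (hV₀ : ∀ n : ℕ, ContDiffOn ℝ n V₀ J)
    (hV₀pos : ∀ x ∈ J, 0 < V₀ x)
    (hQ₀pos : ∀ x ∈ J, 0 < V₀ x - E)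
    (hζ : ∀ n : ℕ, ContDiffOn ℝ n ζ J)
    (hζneg : ∀ x ∈ J, ζ x < 0)
    (hζmono : StrictMonoOn ζ J)
    (hζ' : ∀ x ∈ J, HasDerivAt ζ (Real.sqrt (-(V₀ x - E) / ζ x)) x)
    (xinv : ℝ → ℝ) (hxinv : ∀ x ∈ J, xinv (ζ x) = x) :
    ∀ x ∈ J,
      ((-(V₀ x - E) / ζ x) ^ (-(1 : ℝ) / 4) *
          deriv (deriv (fun z => (-(V₀ (xinv z) - E) / ζ (xinv z)) ^ ((1 : ℝ) / 4))) (ζ x)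
        = 5 / (16 * ζ x ^ 2)
          + (-(V₀ x - E) / ζ x)⁻¹ *
            (1 / 4 * deriv (deriv V₀) x / (V₀ x - E)
              - 5 / 16 * (deriv V₀ x / (V₀ x - E)) ^ 2)) ∧
      (1 / 4 * (-(V₀ x - E) / ζ x)⁻¹ * (1 + x ^ 2)⁻¹
          - (-(V₀ x - E) / ζ x) ^ (-(1 : ℝ) / 4) *
            deriv (deriv (fun z => (-(V₀ (xinv z) - E) / ζ (xinv z)) ^ ((1 : ℝ) / 4))) (ζ x)
        = -5 / (16 * ζ x ^ 2)
          + (-(V₀ x - E) / ζ x)⁻¹ *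
            (1 / 4 * (1 + x ^ 2)⁻¹ - 1 / 4 * deriv (deriv V₀) x / (V₀ x - E)
              + 5 / 16 * (deriv V₀ x / (V₀ x - E)) ^ 2)) := by
  have key : ∀ x ∈ J,
      (-(V₀ x - E) / ζ x) ^ (-(1 : ℝ) / 4) *
          deriv (deriv (fun z => (-(V₀ (xinv z) - E) / ζ (xinv z)) ^ ((1 : ℝ) / 4))) (ζ x)
        = 5 / (16 * ζ x ^ 2)
          + (-(V₀ x - E) / ζ x)⁻¹ *
            (1 / 4 * deriv (deriv V₀) x / (V₀ x - E)
              - 5 / 16 * (deriv V₀ x / (V₀ x - E)) ^ 2) := by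
    have hq : ∀ y ∈ J, 0 < -(V₀ y - E) / ζ y := fun y hy =>
      div_pos_of_neg_of_neg (neg_lt_zero.2 (hQ₀pos y hy)) (hζneg y hy)
    set s : ℝ → ℝ := fun y => (-(V₀ y - E) / ζ y) ^ ((1 : ℝ) / 4) with hs
    have hspos : ∀ y ∈ J, 0 < s y := fun y hy => Real.rpow_pos_of_pos (hq y hy) _
    have hs4 : ∀ y ∈ J, -(V₀ y - E) / ζ y = s y ^ 4 := fun y hy => by
      rw [hs, ← Real.rpow_mul_natCast (hq y hy).le]
      norm_num
    have hsqrt : ∀ y ∈ J, √(-(V₀ y - E) / ζ y) = s y ^ 2 := fun y hy => by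
      rw [hs4 y hy, show s y ^ 4 = (s y ^ 2) ^ 2 by ring, Real.sqrt_sq (by positivity)]
    have hQ' : ∀ y ∈ J, HasDerivAt (fun y => V₀ y - E) (deriv V₀ y) y := fun y hy =>
      ((((hV₀ 1).contDiffAt (hJopen.mem_nhds hy)).differentiableAt
        (by norm_num)).hasDerivAt).sub_const E
    have hs' : ∀ y ∈ J, HasDerivAt s
        (s y / 4 * (deriv V₀ y / (V₀ y - E) - s y ^ 2 / ζ y)) y := fun y hy =>
      hasDerivAt_rpow_quarter_neg_div (Q := fun y => V₀ y - E) (hQ' y hy) (hζ' y hy)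
        (hQ₀pos y hy) (hζneg y hy)
    have hstrict : ∀ y ∈ J, HasStrictDerivAt ζ (s y ^ 2) y := fun y hy =>
      ((hζ 1).contDiffAt (hJopen.mem_nhds hy)).hasStrictDerivAt' (hsqrt y hy ▸ hζ' y hy)
        (by norm_num)
    have hs2 : ∀ y ∈ J, s y ^ 2 ≠ 0 := fun y hy => (pow_pos (hspos y hy) 2).ne'
    have hcomp : ∀ y ∈ J, ∀ (f : ℝ → ℝ) (f' : ℝ), HasDerivAt f f' y →
        HasDerivAt (fun z => f (xinv z)) (f' * (s y ^ 2)⁻¹) (ζ y) := fun y hy f f' hf =>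
      HasDerivAt.comp (ζ y) ((hxinv y hy).symm ▸ hf)
        ((hstrict y hy).hasDerivAt_of_eventually_leftInverse (hs2 y hy)
          (eventually_of_mem (hJopen.mem_nhds hy) hxinv))
    intro x hx
    have hfirst : deriv (fun z => s (xinv z)) =ᶠ[𝓝 (ζ x)] fun z =>
        (fun y => (deriv V₀ y / (V₀ y - E) - s y ^ 2 / ζ y) / (4 * s y)) (xinv z) := by
      rw [← (hstrict x hx).map_nhds_eq (hs2 x hx), EventuallyEq, eventually_map]
      filter_upwards [hJopen.mem_nhds hx] with y hy
      rw [(hcomp y hy s _ (hs' y hy)).deriv]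
      simp only [hxinv y hy]
      have := (hspos y hy).ne'
      field_simp
    have hV'' : HasDerivAt (deriv V₀) (deriv (deriv V₀) x) x :=
      (((((hV₀ 2).deriv_of_isOpen (m := 1) hJopen (by norm_num)).differentiableOn
        one_ne_zero).differentiableAt (hJopen.mem_nhds hx))).hasDerivAt
    have hsne := (hspos x hx).ne'
    have hQne := (hQ₀pos x hx).ne'
    have hζne := (hζneg x hx).ne
    have hsecond := hcomp x hx _ _
      (((hV''.fun_div (hQ' x hx) hQne).fun_sub
        (((hs' x hx).fun_pow 2).fun_div (hstrict x hx).hasDerivAt hζne)).fun_div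
          ((hs' x hx).const_mul 4) (mul_ne_zero four_ne_zero hsne))
    have hinv : (-(V₀ x - E) / ζ x) ^ (-(1 : ℝ) / 4) = (s x)⁻¹ := by
      rw [neg_div (4 : ℝ) 1, Real.rpow_neg (hq x hx).le]
    rw [hfirst.deriv_eq, hsecond.deriv, hinv, hs4 x hx]
    field_simp
    ring
  intro x hx
  refine ⟨key x hx, ?_⟩
  rw [key x hx]
  ring
end
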